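/- There is a constant c (independent of the game) such that every coordination game without bonuses on an unweighted closed chain of m cycles, each cycle having n nodes, admits, from every joint strategy, a finite improvement path of length at most c·n·m² (hence ending in a Nash equilibrium). -/

import Mathlib

open scoped Classical

namespace CG

/-- Payoff of node `i` in a coordination game on a weighted directed graph
with adjacency `adj` (an edge `j → i` is `adj j i`), edge weights `w`,
bonuses `β`, under the joint strategy `s`. -/
noncomputable def payoff {V M : Type} [Fintype V] (adj : V → V → Prop)
    (w : V → V → ℝ) (β : V → M → ℕ) (s : V → M) (i : V) : ℝ :=
  (∑ j ∈ Finset.univ.filter (fun j => adj j i ∧ s j = s i), w j i) + (β i (s i) : ℝ)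

/-- A joint strategy assigns to every node a colour from its colour set. -/
def Valid {V M : Type} (C : V → Finset M) (s : V → M) : Prop :=
  ∀ i, s i ∈ C i

/-- `s'` is a profitable deviation of the (non-empty) coalition
`K = {i | s i ≠ s' i}` from `s`. -/
def ProfDev {V M : Type} [Fintype V] (adj : V → V → Prop) (w : V → V → ℝ)
    (β : V → M → ℕ) (C : V → Finset M) (s s' : V → M) : Prop :=
  Valid C s' ∧ s ≠ s' ∧
    ∀ i, s i ≠ s' i → payoff adj w β s i < payoff adj w β s' i

/-- A profitable deviation of a single player. -/
def UniDev {V M : Type} [Fintype V] (adj : V → V → Prop) (w : V → V → ℝ)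
    (β : V → M → ℕ) (C : V → Finset M) (s s' : V → M) : Prop :=
  ProfDev adj w β C s s' ∧ ∃ i, ∀ j, j ≠ i → s j = s' j

/-- A Nash equilibrium: no single player has a profitable deviation. -/
def IsNash {V M : Type} [Fintype V] (adj : V → V → Prop) (w : V → V → ℝ)
    (β : V → M → ℕ) (C : V → Finset M) (s : V → M) : Prop :=
  Valid C s ∧ ∀ s', ¬ UniDev adj w β C s s'

/-- A strong equilibrium: no coalition has a profitable deviation. -/
def IsStrong {V M : Type} [Fintype V] (adj : V → V → Prop) (w : V → V → ℝ)
    (β : V → M → ℕ) (C : V → Finset M) (s : V → M) : Prop :=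
  Valid C s ∧ ∀ s', ¬ ProfDev adj w β C s s'

/-- There is a finite improvement path of length `L` starting at `s`
(each step a profitable single-player deviation) ending in a Nash equilibrium. -/
def ImpPath {V M : Type} [Fintype V] (adj : V → V → Prop) (w : V → V → ℝ)
    (β : V → M → ℕ) (C : V → Finset M) (s : V → M) (L : ℕ) : Prop :=
  ∃ σ : ℕ → V → M, σ 0 = s ∧
    (∀ t, t < L → UniDev adj w β C (σ t) (σ (t + 1))) ∧
    IsNash adj w β C (σ L)

/-- There is a finite c-improvement path of length `L` starting at `s`
(each step a profitable coalition deviation) ending in a strong equilibrium. -/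
def CImpPath {V M : Type} [Fintype V] (adj : V → V → Prop) (w : V → V → ℝ)
    (β : V → M → ℕ) (C : V → Finset M) (s : V → M) (L : ℕ) : Prop :=
  ∃ σ : ℕ → V → M, σ 0 = s ∧
    (∀ t, t < L → ProfDev adj w β C (σ t) (σ (t + 1))) ∧
    IsStrong adj w β C (σ L)

/-- Adjacency of the simple cycle `1 → 2 → ⋯ → n → 1` on `Fin n`. -/
def cycAdj (n : ℕ) : Fin n → Fin n → Prop :=
  fun i j => (i.val + 1) % n = j.val

/-- Adjacency of a chain of `m` cycles, each of `n` nodes: `node j i` is the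
`(i+1)`-st node of the `(j+1)`-st cycle (`0`-based indices). -/
def chainAdj {V : Type} (m n : ℕ) (node : ℕ → ℕ → V) : V → V → Prop :=
  fun u v => ∃ j i, j < m ∧ i < n ∧ u = node j i ∧ v = node j ((i + 1) % n)

/-- `node`, `k` describe an open chain of `m ≥ 2` simple cycles, each on `n ≥ 3`
nodes, where consecutive cycles `C_j, C_{j+1}` share exactly the node
`node j 0 = node (j+1) (k j)` (with `1 ≤ k j < n`) and the cycles are
otherwise pairwise disjoint, and every vertex lies on some cycle. -/
def IsOpenChain {V : Type} (m n : ℕ) (node : ℕ → ℕ → V) (k : ℕ → ℕ) : Prop :=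
  2 ≤ m ∧ 3 ≤ n ∧
  (∀ j, j + 1 < m → 1 ≤ k j ∧ k j < n) ∧
  (∀ j, j + 1 < m → node j 0 = node (j + 1) (k j)) ∧
  (∀ j i j' i', j < m → i < n → j' < m → i' < n → node j i = node j' i' →
      (j = j' ∧ i = i') ∨ (j' = j + 1 ∧ i = 0 ∧ i' = k j) ∨
      (j = j' + 1 ∧ i' = 0 ∧ i = k j')) ∧
  (∀ v : V, ∃ j i, j < m ∧ i < n ∧ node j i = v)

/-- As `IsOpenChain`, but additionally the last cycle shares exactly the node
`node (m-1) 0 = node 0 (k (m-1))` with the first one. -/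
def IsClosedChain {V : Type} (m n : ℕ) (node : ℕ → ℕ → V) (k : ℕ → ℕ) : Prop :=
  2 ≤ m ∧ 3 ≤ n ∧
  (∀ j, j < m → 1 ≤ k j ∧ k j < n) ∧
  (∀ j, j + 1 < m → node j 0 = node (j + 1) (k j)) ∧
  node (m - 1) 0 = node 0 (k (m - 1)) ∧
  (∀ j i j' i', j < m → i < n → j' < m → i' < n → node j i = node j' i' →
      (j = j' ∧ i = i') ∨ (j' = j + 1 ∧ i = 0 ∧ i' = k j) ∨
      (j = j' + 1 ∧ i' = 0 ∧ i = k j') ∨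
      (j = m - 1 ∧ j' = 0 ∧ i = 0 ∧ i' = k (m - 1)) ∨
      (j' = m - 1 ∧ j = 0 ∧ i' = 0 ∧ i = k (m - 1))) ∧
  (∀ v : V, ∃ j i, j < m ∧ i < n ∧ node j i = v)

/-!
The shared nodes of the cycles are junctions arranged on a circle, and neighbouring junctions are
joined by one pipe in each direction, so that the junction `i` sees the ends of a pipe coming from
`i - 1` and of one coming from `i + 1`. After each move of a junction the two pipes leaving it are
flushed, which takes fewer than `2 * n` moves and delivers to either neighbour the new colour or,
if some inner node of the pipe refuses it, nothing. It thus suffices to reach a stable state of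
this ring game within `O(m ^ 2)` moves of junctions, where an adversary decides which deliveries
succeed.

Sweeping over an arc of the circle stabilises it, which leaves at most one unstable player. If the
colour that this player adopts from its left neighbour goes round the whole ring, the state becomes
stable. The first player to refuse it can only move to the colour offered from its right. If this
colour is delivered to the right neighbour and is acceptable to it, then these two players can be
kept stable while the others are stabilised. Otherwise the right neighbour is the next one that can
only move to the right, and once this wave has gone round the ring every player is stable.
-/

section ReachesWithin

variable {α : Type*} {r : α → α → Prop}

/-- `ReachesWithin r k a b` means that `b` can be reached from `a` by at most `k` steps of `r`. -/
inductive ReachesWithin (r : α → α → Prop) : ℕ → α → α → Prop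
  | refl (k : ℕ) (a : α) : ReachesWithin r k a a
  | head {k : ℕ} {a b c : α} : r a b → ReachesWithin r k b c → ReachesWithin r (k + 1) a c

namespace ReachesWithin

variable {k l : ℕ} {a b c : α}

theorem mono (h : ReachesWithin r k a b) (hkl : k ≤ l) : ReachesWithin r l a b := by
  induction h generalizing l with
  | refl => exact refl l _
  | head hab _ ih =>
    obtain ⟨l, rfl⟩ := Nat.exists_eq_add_of_lt (Nat.lt_of_succ_le hkl)
    exact head hab (ih (by omega))

theorem trans (hab : ReachesWithin r k a b) (hbc : ReachesWithin r l b c) :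
    ReachesWithin r (k + l) a c := by
  induction hab with
  | refl => exact hbc.mono (by omega)
  | head hab _ ih => exact (head hab (ih hbc)).mono (by omega)

theorem tail (hab : ReachesWithin r k a b) (hbc : r b c) : ReachesWithin r (k + 1) a c :=
  hab.trans (head hbc (refl 0 c))

end ReachesWithin

end ReachesWithin

section Arc

variable {m : ℕ}

/-- The arc `{i, i + 1, …, i + (l - 1)}` of `l` consecutive positions on the circle `ZMod m`. -/
def arc (i : ZMod m) (l : ℕ) : Set (ZMod m) :=
  {j | ∃ t : ℕ, t < l ∧ j = i + t}

@[simp]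
theorem arc_zero (i : ZMod m) : arc i 0 = ∅ := by
  simp [arc]

theorem arc_succ (i : ZMod m) (l : ℕ) : arc i (l + 1) = insert i (arc (i + 1) l) := by
  ext j
  constructor
  · rintro ⟨_ | t, ht, rfl⟩
    · simp
    · exact Or.inr ⟨t, by omega, by push_cast; ring⟩
  · rintro (rfl | ⟨t, ht, rfl⟩)
    · exact ⟨0, by omega, by simp⟩
    · exact ⟨t + 1, by omega, by push_cast; ring⟩

theorem arc_succ_right (i : ZMod m) (l : ℕ) : arc i (l + 1) = insert (i + l) (arc i l) := by
  ext j
  constructor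
  · rintro ⟨t, ht, rfl⟩
    rcases Nat.lt_succ_iff_lt_or_eq.1 ht with ht | rfl
    · exact Or.inr ⟨t, ht, rfl⟩
    · exact Or.inl rfl
  · rintro (rfl | ⟨t, ht, rfl⟩)
    · exact ⟨l, by omega, rfl⟩
    · exact ⟨t, by omega, rfl⟩

theorem arc_subset (i : ZMod m) {l l' : ℕ} (h : l ≤ l') : arc i l ⊆ arc i l' :=
  fun _ ⟨t, ht, hj⟩ => ⟨t, by omega, hj⟩

theorem add_one_mem_arc {i j : ZMod m} {l : ℕ} (h : j ∈ arc i (l - 1)) : j + 1 ∈ arc i l := by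
  obtain ⟨t, ht, rfl⟩ := h
  exact ⟨t + 1, by omega, by push_cast; ring⟩

theorem add_one_notMem_arc {i j : ZMod m} {l : ℕ} (h : j ∉ arc (i + 1) l) (hi : j ≠ i) :
    j + 1 ∉ arc (i + 1) l ∧ j + 1 ≠ i + (l + 1 : ℕ) := by
  have hmem : j ∉ arc i (l + 1) := by simp [arc_succ, h, hi]
  refine ⟨fun ⟨t, ht, hj⟩ => hmem ⟨t, by omega, by linear_combination hj⟩, fun hj => ?_⟩
  exact hmem ⟨l, by omega, by push_cast at hj; linear_combination hj⟩

theorem sub_one_notMem_arc {i j : ZMod m} {l : ℕ} (h : j ∉ arc (i + 1) l)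
    (hi : j ≠ i + (l + 1 : ℕ)) : j - 1 ∉ arc (i + 1) l := by
  have hmem : j ∉ arc (i + 1) (l + 1) := by
    rw [arc_succ_right]
    rintro (hj | hj)
    · exact hi (by rw [hj]; push_cast; ring)
    · exact h hj
  exact fun hj => hmem (by simpa using add_one_mem_arc (l := l + 1) hj)

theorem natCast_zmod_ne_zero {t : ℕ} (ht : 0 < t) (htm : t < m) : (t : ZMod m) ≠ 0 := fun h =>
  Nat.not_le.2 htm (Nat.le_of_dvd ht ((ZMod.natCast_eq_zero_iff t m).1 h))

theorem add_succ_ne_self (i : ZMod m) {l : ℕ} (h : l + 1 < m) : i + (l + 1 : ℕ) ≠ i := fun hi =>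
  natCast_zmod_ne_zero l.succ_pos h (by simpa using hi)

theorem notMem_arc_of_lt {i j : ZMod m} {a l : ℕ} (h : j + a = i) (ha : 0 < a)
    (hl : a + l ≤ m) : j ∉ arc i l := by
  rintro ⟨t, ht, hj⟩
  refine natCast_zmod_ne_zero (show 0 < a + t by omega) (show a + t < m by omega) ?_
  push_cast
  linear_combination h - hj

theorem notMem_arc_of_le {i j : ZMod m} {s l : ℕ} (h : j = i + s) (hl : l ≤ s) (hs : s < m) :
    j ∉ arc i l := by
  rintro ⟨t, ht, hj⟩
  refine natCast_zmod_ne_zero (show 0 < s - t by omega) (show s - t < m by omega) ?_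
  rw [Nat.cast_sub (by omega)]
  linear_combination hj - h

theorem self_notMem_arc (i : ZMod m) {l : ℕ} (h : l < m) : i ∉ arc (i + 1) l :=
  notMem_arc_of_lt (a := 1) (by simp) one_pos (by omega)

theorem self_sub_one_notMem_arc (i : ZMod m) {l : ℕ} (h : l + 1 < m) : i - 1 ∉ arc (i + 1) l :=
  notMem_arc_of_lt (a := 2) (by push_cast; ring) two_pos (by omega)

theorem add_succ_notMem_arc (i : ZMod m) {l : ℕ} (h : l < m) : i + (l + 1 : ℕ) ∉ arc (i + 1) l :=
  notMem_arc_of_le (s := l) (by push_cast; ring) le_rfl h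

theorem add_succ_add_one_notMem_arc (i : ZMod m) {l : ℕ} (h : l + 1 < m) :
    i + (l + 1 : ℕ) + 1 ∉ arc (i + 1) l :=
  notMem_arc_of_le (s := l + 1) (by push_cast; ring) l.le_succ h

theorem mem_arc_of_ne [NeZero m] {i j : ZMod m} (h : j ≠ i) : j ∈ arc (i + 1) (m - 1) := by
  have hlt := ZMod.val_lt (j - i)
  have hpos : 0 < (j - i).val := Nat.pos_of_ne_zero (by simpa [sub_eq_zero] using h)
  refine ⟨(j - i).val - 1, by omega, ?_⟩
  rw [Nat.cast_pred hpos, ZMod.natCast_zmod_val]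
  ring

theorem mem_arc_of_ne_of_ne [NeZero m] {i j : ZMod m} (hi : j ≠ i) (hi' : j ≠ i - 1) :
    j ∈ arc (i + 1) (m - 2) := by
  obtain ⟨t, ht, rfl⟩ := mem_arc_of_ne hi
  refine ⟨t, ?_, rfl⟩
  by_contra hlt
  have hm : t + 2 = m := by omega
  have : (t : ZMod m) + 2 = 0 := by rw [← ZMod.natCast_self m, ← hm, Nat.cast_add, Nat.cast_two]
  exact hi' (by linear_combination this)

end Arc

/-! ### The ring game -/

section Ring

variable {m : ℕ} {M : Type*} {C : ZMod m → Set M}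

/-- A state of the ring game: the player at position `i` of the circle `ZMod m` holds the colour
`col i ∈ C i`, while `left i` and `right i` are the colours most recently delivered to it from
the sides of `i - 1` and `i + 1`. -/
structure RingState (C : ZMod m → Set M) where
  col : ZMod m → M
  left : ZMod m → M
  right : ZMod m → M
  col_mem : ∀ i, col i ∈ C i

namespace RingState

/-- The player at `i` has no incentive to switch: it agrees with a neighbour, or it can agree with
neither of them. -/
def Stable (s : RingState C) (i : ZMod m) : Prop :=
  s.col i = s.left i ∨ s.col i = s.right i ∨ s.left i ∉ C i ∧ s.right i ∉ C i

/-- The player at `i` agrees with its left neighbour if it can. -/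
def LeftSettled (s : RingState C) (i : ZMod m) : Prop :=
  s.col i = s.left i ∨ s.left i ∉ C i

theorem Stable.congr {s t : RingState C} {i : ZMod m} (h : s.Stable i) (hcol : t.col i = s.col i)
    (hleft : t.left i = s.left i) (hright : t.right i = s.right i) : t.Stable i := by
  rwa [Stable, hcol, hleft, hright]

theorem LeftSettled.congr {s t : RingState C} {i : ZMod m} (h : s.LeftSettled i)
    (hcol : t.col i = s.col i) (hleft : t.left i = s.left i) : t.LeftSettled i := by
  rwa [LeftSettled, hcol, hleft]

theorem right_mem_of_not_stable {s : RingState C} {i : ZMod m} (h : ¬ s.Stable i)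
    (hl : s.left i ∉ C i) : s.right i ∈ C i := by
  by_contra hr
  exact h (Or.inr (Or.inr ⟨hl, hr⟩))

theorem LeftSettled.left_notMem {s : RingState C} {i : ZMod m} (hs : s.LeftSettled i)
    (h : ¬ s.Stable i) : s.left i ∉ C i :=
  hs.resolve_left fun hl => h (Or.inl hl)

/-- A move of the ring game from `s` to `t`: the player at `i` switches to the colour `c`, and an
adversary chooses, separately on each side, whether `c` is delivered to the neighbour. -/
structure IsMove (s : RingState C) (i : ZMod m) (c : M) (t : RingState C) : Prop where
  col_self : t.col i = c
  col_ne : ∀ j, j ≠ i → t.col j = s.col j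
  left_or : ∀ j, t.left j = s.left j ∨ j = i + 1 ∧ t.left j = c
  right_or : ∀ j, t.right j = s.right j ∨ j + 1 = i ∧ t.right j = c

namespace IsMove

variable {s t : RingState C} {i j : ZMod m} {c : M}

theorem left_eq (h : IsMove s i c t) (hj : j ≠ i + 1) : t.left j = s.left j :=
  (h.left_or j).resolve_right fun h => hj h.1

theorem right_eq (h : IsMove s i c t) (hj : j + 1 ≠ i) : t.right j = s.right j :=
  (h.right_or j).resolve_right fun h => hj h.1

theorem stable_or (h : IsMove s i c t) (hs : s.Stable j) (hj : j ≠ i) :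
    t.Stable j ∨ (j = i + 1 ∧ t.left j = c) ∨ (j + 1 = i ∧ t.right j = c) := by
  rcases h.left_or j with hl | hl
  · rcases h.right_or j with hr | hr
    · exact Or.inl (hs.congr (h.col_ne j hj) hl hr)
    · exact Or.inr (Or.inr hr)
  · exact Or.inr (Or.inl hl)

theorem stable (h : IsMove s i c t) (hs : s.Stable j) (hj : j ≠ i) (hj₁ : j ≠ i + 1)
    (hj₂ : j + 1 ≠ i) : t.Stable j :=
  hs.congr (h.col_ne j hj) (h.left_eq hj₁) (h.right_eq hj₂)

theorem leftSettled (h : IsMove s i c t) (hs : s.LeftSettled j) (hj : j ≠ i) (hj' : j ≠ i + 1) :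
    t.LeftSettled j :=
  hs.congr (h.col_ne j hj) (h.left_eq hj')

theorem stable_or_right (h : IsMove s i c t) (hs : s.Stable j) (hj : j ≠ i)
    (hsl : s.left j ∉ C j) (htl : t.left j ∉ C j) :
    t.Stable j ∨ (j + 1 = i ∧ t.right j = c) := by
  refine (h.right_or j).imp_left fun hr => ?_
  rw [Stable, h.col_ne j hj, hr]
  rcases hs with hs | hs | hs
  · exact absurd (hs ▸ s.col_mem j) hsl
  · exact Or.inr (Or.inl hs)
  · exact Or.inr (Or.inr ⟨htl, hs.2⟩)

theorem stable_or_left (h : IsMove s i c t) (hs : s.Stable j) (hj : j ≠ i)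
    (hsr : s.right j ∉ C j) (htr : t.right j ∉ C j) :
    t.Stable j ∨ (j = i + 1 ∧ t.left j = c) := by
  refine (h.left_or j).imp_left fun hl => ?_
  rw [Stable, h.col_ne j hj, hl]
  rcases hs with hs | hs | hs
  · exact Or.inl hs
  · exact absurd (hs ▸ s.col_mem j) hsr
  · exact Or.inr (Or.inr ⟨hs.1, htr⟩)

theorem stable_or_left_of_col_eq (h : IsMove s i c t) (hs : s.Stable j) (hj : j ≠ i)
    (hcol : j + 1 = i → s.col j = c) : t.Stable j ∨ (j = i + 1 ∧ t.left j = c) := by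
  rcases h.stable_or hs hj with ht | ht | ⟨hji, hr⟩
  · exact Or.inl ht
  · exact Or.inr ht
  · exact Or.inl (Or.inr (Or.inl (by rw [h.col_ne j hj, hcol hji, hr])))

section

variable [Fact (1 < m)]

theorem left_self (h : IsMove s i c t) : t.left i = s.left i :=
  h.left_eq (by simp)

theorem right_self (h : IsMove s i c t) : t.right i = s.right i :=
  h.right_eq (by simp)

end

end IsMove

/-- Every player outside `A` keeps its colour, and so do the deliveries it makes. -/
def AgreesOff (A : Set (ZMod m)) (s t : RingState C) : Prop :=
  ∀ j ∉ A, t.col j = s.col j ∧ t.left (j + 1) = s.left (j + 1) ∧ t.right (j - 1) = s.right (j - 1)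

namespace AgreesOff

variable {A : Set (ZMod m)} {s t u : RingState C} {j : ZMod m}

theorem refl (A : Set (ZMod m)) (s : RingState C) : AgreesOff A s s := fun _ _ =>
  ⟨rfl, rfl, rfl⟩

theorem trans (h : AgreesOff A s t) (h' : AgreesOff A t u) : AgreesOff A s u := fun j hj =>
  ⟨(h' j hj).1.trans (h j hj).1, (h' j hj).2.1.trans (h j hj).2.1,
    (h' j hj).2.2.trans (h j hj).2.2⟩

theorem col_eq (h : AgreesOff A s t) (hj : j ∉ A) : t.col j = s.col j :=
  (h j hj).1

theorem left_succ_eq (h : AgreesOff A s t) (hj : j ∉ A) : t.left (j + 1) = s.left (j + 1) :=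
  (h j hj).2.1

theorem right_pred_eq (h : AgreesOff A s t) (hj : j ∉ A) : t.right (j - 1) = s.right (j - 1) :=
  (h j hj).2.2

theorem left_eq (h : AgreesOff A s t) (hj : j - 1 ∉ A) : t.left j = s.left j := by
  simpa using h.left_succ_eq hj

theorem right_eq (h : AgreesOff A s t) (hj : j + 1 ∉ A) : t.right j = s.right j := by
  simpa using h.right_pred_eq hj

theorem stable (h : AgreesOff A s t) (hs : s.Stable j) (hj : j ∉ A) (hj₁ : j - 1 ∉ A)
    (hj₂ : j + 1 ∉ A) : t.Stable j :=
  hs.congr (h.col_eq hj) (h.left_eq hj₁) (h.right_eq hj₂)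

end AgreesOff

theorem IsMove.agreesOff {A : Set (ZMod m)} {s t : RingState C} {i : ZMod m} {c : M}
    (h : IsMove s i c t) (hi : i ∈ A) : AgreesOff A s t := fun j hj => by
  have hji : j ≠ i := fun h => hj (h ▸ hi)
  exact ⟨h.col_ne j hji, h.left_eq (by simpa using hji), h.right_eq (by simpa using hji)⟩

/-- Whatever the adversary does, from `s` one can reach a state satisfying `P` by at most `k`
moves of unstable players in `A`, each switching to the colour of one of its neighbours. -/
inductive Forces (A : Set (ZMod m)) (P : RingState C → Prop) : ℕ → RingState C → Prop
  | done {k : ℕ} {s : RingState C} : P s → Forces A P k s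
  | move {k : ℕ} {s : RingState C} (i : ZMod m) (c : M) : i ∈ A → ¬ s.Stable i →
      c = s.left i ∨ c = s.right i → c ∈ C i →
      (∀ t, IsMove s i c t → Forces A P k t) → Forces A P (k + 1) s

namespace Forces

variable {A B : Set (ZMod m)} {P Q : RingState C → Prop} {k l : ℕ} {s : RingState C}

theorem weaken (h : Forces A P k s) (hA : A ⊆ B) (hk : k ≤ l) (hP : ∀ t, P t → Q t) :
    Forces B Q l s := by
  induction h generalizing l with
  | done h => exact done (hP _ h)
  | move i c hi hs hc hcC _ ih =>
    obtain ⟨l, rfl⟩ := Nat.exists_eq_add_of_lt (Nat.lt_of_succ_le hk)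
    exact move i c (hA hi) hs hc hcC fun t ht => ih t ht (by omega)

theorem mono (h : Forces A P k s) (hk : k ≤ l) : Forces A P l s :=
  h.weaken subset_rfl hk fun _ => id

theorem bind (h : Forces A P k s) (hP : ∀ t, P t → Forces A Q l t) : Forces A Q (k + l) s := by
  induction h with
  | done h => exact (hP _ h).mono (by omega)
  | @move k s i c hi hs hc hcC _ ih =>
    rw [Nat.add_right_comm]
    exact move i c hi hs hc hcC ih

theorem and_agreesOff (h : Forces A P k s) : Forces A (fun t => P t ∧ AgreesOff A s t) k s := by
  induction h with
  | done h => exact done ⟨h, .refl A _⟩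
  | move i c hi hs hc hcC _ ih =>
    refine move i c hi hs hc hcC fun t ht => (ih t ht).weaken subset_rfl le_rfl ?_
    exact fun u hu => ⟨hu.1, (ht.agreesOff hi).trans hu.2⟩

end Forces

/-- Whatever the adversary does, at most `k` moves suffice to make every player stable. -/
def Stabilizes (k : ℕ) (s : RingState C) : Prop :=
  Forces Set.univ (fun t => ∀ i, t.Stable i) k s

theorem Stabilizes.mono {k l : ℕ} {s : RingState C} (h : s.Stabilizes k) (hk : k ≤ l) :
    s.Stabilizes l :=
  Forces.mono h hk

theorem Forces.stabilizes {A : Set (ZMod m)} {P : RingState C → Prop} {k l : ℕ} {s : RingState C}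
    (h : Forces A P k s) (hP : ∀ t, P t → t.Stabilizes l) : s.Stabilizes (k + l) :=
  (h.weaken (Set.subset_univ A) le_rfl fun _ => id).bind hP

theorem stabilizes_of_move_left {k : ℕ} {s : RingState C} {i : ZMod m} (hs : ¬ s.Stable i)
    (hc : s.left i ∈ C i) (h : ∀ t, IsMove s i (s.left i) t → t.Stabilizes k) :
    s.Stabilizes (k + 1) :=
  .move i _ (Set.mem_univ i) hs (Or.inl rfl) hc h

theorem stabilizes_of_move_right {k : ℕ} {s : RingState C} {i : ZMod m} (hs : ¬ s.Stable i)
    (hc : s.right i ∈ C i) (h : ∀ t, IsMove s i (s.right i) t → t.Stabilizes k) :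
    s.Stabilizes (k + 1) :=
  .move i _ (Set.mem_univ i) hs (Or.inr rfl) hc h

section Reflect

/-- The mirror image of a state under `i ↦ -i`. -/
def reflect (s : RingState C) : RingState fun i => C (-i) where
  col i := s.col (-i)
  left i := s.right (-i)
  right i := s.left (-i)
  col_mem i := s.col_mem (-i)

theorem stable_reflect {s : RingState C} {i : ZMod m} :
    s.reflect.Stable i ↔ s.Stable (-i) := by
  simp only [Stable, reflect]
  tauto

theorem IsMove.reflect {s t : RingState C} {i : ZMod m} {c : M} (h : IsMove s i c t) :
    IsMove s.reflect (-i) c t.reflect where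
  col_self := by simpa [RingState.reflect] using h.col_self
  col_ne j hj := h.col_ne (-j) (by rwa [ne_eq, neg_eq_iff_eq_neg])
  left_or j := (h.right_or (-j)).imp_right <| And.imp_left fun h => by linear_combination -h
  right_or j := (h.left_or (-j)).imp_right <| And.imp_left fun h => by linear_combination -h

theorem Stabilizes.of_reflect {k : ℕ} {s : RingState C} (h : s.reflect.Stabilizes k) :
    s.Stabilizes k := by
  obtain ⟨s', hs'⟩ : ∃ s', s' = s.reflect := ⟨_, rfl⟩
  rw [← hs'] at h
  induction h generalizing s with
  | done h =>
    subst hs'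
    exact .done fun i => by simpa using stable_reflect.1 (h (-i))
  | move i c _ hs hc hcC _ ih =>
    subst hs'
    refine .move (-i) c (Set.mem_univ _) (fun h => hs (stable_reflect.2 h)) hc.symm hcC ?_
    exact fun t ht => ih _ (by simpa using ht.reflect) rfl

end Reflect

/-- The aim of stabilising the arc `{i, …, i + (l - 1)}` of `s` from the right: at `t` the arc is
stable, and if its first player has made a delivery to the left, then either its present colour
was delivered, or it agrees with its right neighbour. -/
def ArcStabilized (s : RingState C) (i : ZMod m) (l : ℕ) (t : RingState C) : Prop :=
  (∀ j ∈ arc i l, t.Stable j) ∧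
    (t.right (i - 1) = s.right (i - 1) ∨ t.right (i - 1) = t.col i ∨ t.col i = t.right i)

theorem ArcStabilized.succ {s t : RingState C} {i : ZMod m} {l : ℕ} (hi : t.Stable i)
    (h : ∀ j ∈ arc (i + 1) l, t.Stable j)
    (hr : t.right (i - 1) = s.right (i - 1) ∨ t.right (i - 1) = t.col i ∨ t.col i = t.right i) :
    s.ArcStabilized i (l + 1) t :=
  ⟨by simpa [arc_succ] using ⟨hi, h⟩, hr⟩

theorem IsMove.stable_arc {s t : RingState C} {i : ZMod m} {l : ℕ} (ht : IsMove s i (s.right i) t)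
    (hl : l + 1 < m) (hs : ∀ j ∈ arc (i + 1) l, s.Stable j)
    (hi : s.right i = s.col (i + 1) ∨ s.col (i + 1) = s.right (i + 1)) :
    ∀ j ∈ arc (i + 1) l, t.Stable j := by
  intro j hj
  have hi' : i - 1 ∉ arc (i + 1) l := self_sub_one_notMem_arc i (by omega)
  have hji : j + 1 ≠ i := fun h => hi' (eq_sub_of_add_eq h ▸ hj)
  have hne : j ≠ i :=
    ne_of_mem_of_not_mem hj (self_notMem_arc i (by omega))
  rcases ht.stable_or (hs j hj) hne with h | ⟨rfl, h⟩ | h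
  · exact h
  · rw [Stable, ht.col_ne _ hne, h, ht.right_eq hji]
    exact hi.elim (fun h => Or.inl h.symm) fun h => Or.inr (Or.inl h)
  · exact absurd h.1 hji

/-- On the arc `{i + 1, …, i + j}` every player agrees with its left neighbour if it can, and only
the last player may be unstable, in which case it is offered the colour `e` from the right. -/
structure Pushable (e : M) (s : RingState C) (i : ZMod m) (j : ℕ) : Prop where
  settled : ∀ p ∈ arc (i + 1) j, s.LeftSettled p
  stable : ∀ p ∈ arc (i + 1) (j - 1), s.Stable p
  last : 0 < j → s.Stable (i + j) ∨ s.right (i + j) = e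

theorem IsMove.pushable {s t : RingState C} {e : M} {i : ZMod m} {j : ℕ}
    (ht : IsMove s (i + (j + 1 : ℕ)) e t) (hj : j + 1 < m)
    (hsettled : ∀ p ∈ arc (i + 1) j, s.LeftSettled p)
    (hstable : ∀ p ∈ arc (i + 1) j, s.Stable p) : t.Pushable e i j := by
  have hne {p : ZMod m} (hp : p ∈ arc (i + 1) j) : p ≠ i + (j + 1 : ℕ) :=
    ne_of_mem_of_not_mem hp (add_succ_notMem_arc i (by omega))
  have hne' {p : ZMod m} (hp : p ∈ arc (i + 1) j) : p ≠ i + (j + 1 : ℕ) + 1 :=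
    ne_of_mem_of_not_mem hp (add_succ_add_one_notMem_arc i hj)
  refine ⟨fun p hp => ht.leftSettled (hsettled p hp) (hne hp) (hne' hp), fun p hp => ?_,
    fun hj0 => ?_⟩
  · have hp' := arc_subset (i + 1) (Nat.sub_le j 1) hp
    exact ht.stable (hstable p hp') (hne hp') (hne' hp') (hne (add_one_mem_arc hp))
  · have hmem : i + (j : ZMod m) ∈ arc (i + 1) j :=
      ⟨j - 1, by omega, by rw [Nat.cast_pred hj0]; ring⟩
    exact (ht.stable_or (hstable _ hmem) (hne hmem)).imp_right fun h =>
      (h.resolve_left fun h => hne' hmem h.1).2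

theorem AgreesOff.stable_of_notMem_arc {s t : RingState C} {i p : ZMod m} {j : ℕ}
    (h : AgreesOff (arc (i + 1) j) s t) (hs : s.Stable p) (hp : p ∉ arc (i + 1) j) (hi : p ≠ i)
    (hi' : p ≠ i + (j + 1 : ℕ)) : t.Stable p :=
  h.stable hs hp (sub_one_notMem_arc hp hi') (add_one_notMem_arc hp hi).1

variable [Fact (1 < m)]

theorem IsMove.forces_arcStabilized {s t : RingState C} {i : ZMod m} {c : M} {l k : ℕ}
    (ht : IsMove s i c t) (hl : l + 1 < m)
    (h : Forces (arc (i + 1) l) (t.ArcStabilized (i + 1) l) k t) :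
    Forces (arc (i + 1) l) (fun u => (∀ j ∈ arc (i + 1) l, u.Stable j) ∧
      (u.right i = s.right i ∨ u.right i = u.col (i + 1) ∨ u.col (i + 1) = u.right (i + 1)) ∧
      u.col i = c ∧ u.left i = s.left i ∧
      (u.right (i - 1) = s.right (i - 1) ∨ u.right (i - 1) = c)) k t := by
  have hi : i ∉ arc (i + 1) l := self_notMem_arc i (by omega)
  have hi' : i - 1 ∉ arc (i + 1) l := self_sub_one_notMem_arc i (by omega)
  refine h.and_agreesOff.weaken subset_rfl le_rfl ?_
  rintro u ⟨⟨hu, hright⟩, htu⟩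
  rw [add_sub_cancel_right, ht.right_self] at hright
  rw [htu.col_eq hi, ht.col_self, htu.left_eq hi', ht.left_self, htu.right_pred_eq hi]
  exact ⟨hu, hright, rfl, rfl, (ht.right_or _).imp_right And.right⟩

/- The first player moves left if it can. Only when it cannot does it move right, and then it may
have to follow its right neighbour once more. -/
theorem forces_arcStabilized : ∀ (l : ℕ) (i : ZMod m) (s : RingState C), l < m →
    (∀ j ∈ arc i l, j ≠ i → s.Stable j) → Forces (arc i l) (s.ArcStabilized i l) (2 * l) s := by
  intro l
  induction l with
  | zero => exact fun i s _ _ => .done ⟨by simp, Or.inl rfl⟩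
  | succ l ih =>
    intro i s hl htail
    rw [arc_succ] at htail ⊢
    have hi : i ∉ arc (i + 1) l := self_notMem_arc i (by omega)
    replace htail : ∀ j ∈ arc (i + 1) l, s.Stable j := fun j hj =>
      htail j (Or.inr hj) (ne_of_mem_of_not_mem hj hi)
    by_cases hsi : s.Stable i
    · exact .done (.succ hsi htail (Or.inl rfl))
    have after_move {c t} (ht : IsMove s i c t) :=
      ht.forces_arcStabilized hl <| ih (i + 1) t (by omega) fun j hj hj' =>
        ht.stable (htail j hj) (ne_of_mem_of_not_mem hj hi) hj' fun h =>
          self_sub_one_notMem_arc i hl (eq_sub_of_add_eq h ▸ hj)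
    by_cases hleft : s.left i ∈ C i
    · refine (Forces.move i _ (Or.inl rfl) hsi (Or.inl rfl) hleft fun t ht =>
        (after_move ht).weaken (Set.subset_insert i _) le_rfl ?_).mono (by omega)
      rintro u ⟨hu, -, hcol, huleft, hright⟩
      exact .succ (Or.inl (hcol.trans huleft.symm)) hu (by rw [hcol]; tauto)
    · refine .move i _ (Or.inl rfl) hsi (Or.inr rfl) (right_mem_of_not_stable hsi hleft)
        fun t ht => ((after_move ht).weaken (Set.subset_insert i _) le_rfl fun _ =>
          id).bind (l := 1) ?_
      rintro u ⟨hu, hright, hcol, huleft, hright'⟩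
      by_cases hui : u.Stable i
      · exact .done (.succ hui hu (by rw [hcol]; tauto))
      have hright := hright.resolve_left fun h => hui (Or.inr (Or.inl (hcol.trans h.symm)))
      refine .move i _ (Or.inl rfl) hui (Or.inr rfl)
        (right_mem_of_not_stable hui (huleft ▸ hleft)) fun v hv => .done ?_
      have hvi : v.col i = v.right i := hv.col_self.trans hv.right_self.symm
      exact .succ (Or.inr (Or.inl hvi)) (hv.stable_arc hl hu hright) (Or.inr (Or.inr hvi))

theorem forces_stable_arc (l : ℕ) (i : ZMod m) (s : RingState C) (hl : l < m) :
    Forces (arc i l) (fun t => ∀ j ∈ arc i l, t.Stable j) (l * (l + 1)) s := by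
  induction l generalizing i with
  | zero => exact .done (by simp)
  | succ l ih =>
    refine (((ih (i + 1) (by omega)).weaken ?_ le_rfl fun _ => id).bind fun t ht =>
      (forces_arcStabilized (l + 1) i t hl ?_).weaken subset_rfl le_rfl fun _ => And.left).mono ?_
    · exact arc_succ i l ▸ Set.subset_insert _ _
    · intro j hj hji
      exact ht j ((arc_succ i l ▸ hj).resolve_left hji)
    · exact le_of_eq (by ring)

theorem forces_stable_compl (i : ZMod m) (s : RingState C) :
    Forces {i}ᶜ (fun t => (∀ j, j ≠ i → t.Stable j) ∧ AgreesOff {i}ᶜ s t) (m ^ 2) s := by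
  have hm : 1 < m := Fact.out
  have : NeZero m := ⟨by omega⟩
  refine ((forces_stable_arc (m - 1) (i + 1) s (by omega)).weaken ?_ ?_ ?_).and_agreesOff
  · rintro j hj rfl
    exact self_notMem_arc _ (by omega) hj
  · exact sq m ▸ Nat.mul_le_mul (by omega) (by omega)
  · exact fun t ht j hj => ht j (mem_arc_of_ne hj)

theorem forces_stable_compl_pair (i : ZMod m) (s : RingState C) :
    Forces {i, i - 1}ᶜ
      (fun t => (∀ j, j ≠ i → j ≠ i - 1 → t.Stable j) ∧ AgreesOff {i, i - 1}ᶜ s t) (m ^ 2) s := by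
  have hm : 1 < m := Fact.out
  have : NeZero m := ⟨by omega⟩
  refine ((forces_stable_arc (m - 2) (i + 1) s (by omega)).weaken ?_ ?_ ?_).and_agreesOff
  · rintro j hj (rfl | rfl)
    · exact self_notMem_arc _ (by omega) hj
    · exact self_sub_one_notMem_arc i (by omega) hj
  · exact sq m ▸ Nat.mul_le_mul (by omega) (by omega)
  · exact fun t ht j hj hj' => ht j (mem_arc_of_ne_of_ne hj hj')

/- When all players but `i` and `i - 1` are stable, `i - 1` can adopt the colour of `i`, and then it
stays stable as long as `i` does not move. -/
theorem forces_of_right_pred_eq_col {s : RingState C} {i : ZMod m}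
    (hr : s.right (i - 1) = s.col i) (hC : s.col i ∈ C (i - 1)) :
    Forces Set.univ (fun t => (∀ j, j ≠ i → t.Stable j) ∧ t.col i = s.col i ∧
      t.left (i + 1) = s.left (i + 1) ∧ (t.left i = s.left i ∨ t.left i = s.col i))
      (2 * m ^ 2 + 1) s := by
  have hmem : i ∉ ({i, i - 1}ᶜ : Set (ZMod m)) := by simp
  have hmem' : i - 1 ∉ ({i, i - 1}ᶜ : Set (ZMod m)) := by simp
  have hne : i ≠ i - 1 := by simp [eq_sub_iff_add_eq]
  refine ((forces_stable_compl_pair i s).weaken (Set.subset_univ _) le_rfl fun _ =>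
    id).bind (l := m ^ 2 + 1) ?_ |>.mono (by omega)
  rintro t ⟨ht, hst⟩
  by_cases hti : t.Stable (i - 1)
  · refine .done ⟨fun j hj => ?_, hst.col_eq hmem, hst.left_succ_eq hmem,
      Or.inl (hst.left_eq hmem')⟩
    by_cases hj' : j = i - 1
    · exact hj' ▸ hti
    · exact ht j hj hj'
  · have htr : t.right (i - 1) = s.col i := (hst.right_pred_eq hmem).trans hr
    refine .move (i - 1) _ (Set.mem_univ _) hti (Or.inr rfl) (htr ▸ hC) fun u hu =>
      (forces_stable_compl_pair i u).weaken (Set.subset_univ _) le_rfl ?_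
    rintro v ⟨hv, huv⟩
    refine ⟨fun j hj => ?_, ?_, ?_, ?_⟩
    · by_cases hj' : j = i - 1
      · refine hj' ▸ Or.inr (Or.inl ?_)
        rw [huv.col_eq hmem', huv.right_pred_eq hmem, hu.col_self, hu.right_self]
      · exact hv j hj hj'
    · rw [huv.col_eq hmem, hu.col_ne i hne, hst.col_eq hmem]
    · rw [huv.left_succ_eq hmem, hu.left_eq (by simp), hst.left_succ_eq hmem]
    · rw [huv.left_eq hmem', ← hst.left_eq hmem', ← htr]
      exact (hu.left_or i).imp_right And.right

theorem stabilizes_of_right_pred_eq_col {s : RingState C} {i : ZMod m} (hl : s.col i = s.left i)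
    (hr : s.right (i - 1) = s.col i) (hC : s.col i ∈ C (i - 1)) : s.Stabilizes (3 * m ^ 2) := by
  have hm : 1 ≤ m ^ 2 := Nat.one_le_pow _ _ (Nat.zero_lt_of_lt (Fact.out : 1 < m))
  refine ((forces_of_right_pred_eq_col hr hC).weaken subset_rfl (by omega) ?_).mono le_rfl
  rintro t ⟨ht, hcol, -, hleft⟩ j
  by_cases hj : j = i
  · refine hj ▸ Or.inl ?_
    rw [hcol]
    exact hleft.elim (fun h => hl.trans h.symm) Eq.symm
  · exact ht j hj

theorem stabilizes_of_left_succ_eq_col {s : RingState C} {i : ZMod m} (hr : s.col i = s.right i)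
    (hl : s.left (i + 1) = s.col i) (hC : s.col i ∈ C (i + 1)) : s.Stabilizes (3 * m ^ 2) := by
  refine .of_reflect (stabilizes_of_right_pred_eq_col (i := -i) ?_ ?_ ?_) <;>
    simpa [reflect, add_comm]

theorem Pushable.forces : ∀ {e : M} {j : ℕ} {i : ZMod m} {s : RingState C}, s.Pushable e i j →
    j < m → Forces (arc (i + 1) j) (fun t : RingState C =>
      (∀ p ∈ arc (i + 1) j, t.Stable p ∧ t.LeftSettled p) ∧
      (t.left (i + j + 1) = s.left (i + j + 1) ∨ t.left (i + j + 1) = e) ∧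
      (t.right i = s.right i ∨ t.right i = e)) j s := by
  intro e j
  induction j with
  | zero => exact fun _ _ => .done (by simp)
  | succ j ih =>
    rintro i s ⟨hsettled, hstable, hlast⟩ hj
    have hq : i + 1 + j = i + (j + 1 : ℕ) := by push_cast; ring
    rw [add_tsub_cancel_right] at hstable
    simp only [arc_succ_right, hq] at hsettled ⊢
    by_cases hsq : s.Stable (i + (j + 1 : ℕ))
    · refine .done ⟨?_, Or.inl rfl, Or.inl rfl⟩
      rintro p (rfl | hp)
      · exact ⟨hsq, hsettled _ (Or.inl rfl)⟩
      · exact ⟨hstable p hp, hsettled p (Or.inr hp)⟩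
    have hl := (hsettled _ (Or.inl rfl)).left_notMem hsq
    obtain rfl := (hlast (by omega)).resolve_left hsq
    refine .move _ _ (Or.inl rfl) hsq (Or.inr rfl) (right_mem_of_not_stable hsq hl) fun t ht => ?_
    refine (ih (ht.pushable hj (fun p hp => hsettled p (Or.inr hp)) hstable)
      (by omega)).and_agreesOff.weaken (Set.subset_insert _ _) le_rfl ?_
    rintro u ⟨⟨hu, hleft, hright⟩, htu⟩
    rw [show i + j + 1 = i + (j + 1 : ℕ) by push_cast; ring, ht.left_self] at hleft
    have hq_notMem := add_succ_notMem_arc i (l := j) (by omega)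
    have hq_notMem' := add_succ_add_one_notMem_arc i hj
    generalize i + ((j + 1 : ℕ) : ZMod m) = q at *
    have hcol : u.col q = s.right q := (htu.col_eq hq_notMem).trans ht.col_self
    have hur : u.right q = s.right q := (htu.right_eq hq_notMem').trans ht.right_self
    refine ⟨?_, ?_, ?_⟩
    · rintro p (rfl | hp)
      · exact ⟨Or.inr (Or.inl (hcol.trans hur.symm)),
          hleft.symm.imp (fun h => hcol.trans h.symm) fun h => by rwa [h]⟩
      · exact hu p hp
    · exact htu.left_succ_eq hq_notMem ▸ (ht.left_or _).imp_right And.right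
    · exact hright.elim (fun h => h ▸ (ht.right_or i).imp_right And.right) Or.inr

/-- The wave that starts when `i + 1` refuses the colour of `i` has reached the player `i + q`: only
`i` and `i + q` may be unstable, the players before `i + q` agree with their left neighbours if they
can, and `i + q` can only move to the colour offered from its right. -/
structure Wave (s : RingState C) (i : ZMod m) (q : ℕ) : Prop where
  stable : ∀ p, p ≠ i → p ≠ i + q → s.Stable p
  settled : ∀ p ∈ arc (i + 1) (q - 1), s.LeftSettled p
  follows : q < m → s.col i = s.left i
  front : s.Stable (i + q) ∨ s.left (i + q) ∉ C (i + q)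
  refused : s.left (i + 1) ∉ C (i + 1)

theorem Wave.front_succ {s t u : RingState C} {i : ZMod m} {c : M} {j : ℕ}
    (hs : s.Wave i (j + 1)) (hj : j + 1 < m) (ht : IsMove s (i + (j + 1 : ℕ)) c t)
    (hnext : t.left (i + (j + 1 : ℕ) + 1) = c → c ∉ C (i + (j + 1 : ℕ) + 1))
    (htu : AgreesOff (arc (i + 1) j) t u) :
    u.Stable (i + (j + 1 : ℕ) + 1) ∨
      u.left (i + (j + 1 : ℕ) + 1) ∉ C (i + (j + 1 : ℕ) + 1) := by
  have hi : i ∉ arc (i + 1) j := self_notMem_arc i (by omega)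
  have hxi : i + (j + 1 : ℕ) ≠ i := add_succ_ne_self i hj
  have hx : i + (j + 1 : ℕ) ∉ arc (i + 1) j := add_succ_notMem_arc i (by omega)
  have hx' : i + (j + 1 : ℕ) + 1 ∉ arc (i + 1) j := add_succ_add_one_notMem_arc i hj
  have hlast : i + (j + 1 : ℕ) + 1 + 1 = i + (j + 1 : ℕ) → i + ((j + 1 : ℕ) : ZMod m) + 1 = i := by
    intro h
    have h2 : ((2 : ℕ) : ZMod m) = 0 := by push_cast; linear_combination h
    have hj0 : j = 0 := by
      by_contra hj0
      exact natCast_zmod_ne_zero (m := m) (t := 2) (by omega) (by omega) h2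
    push_cast [hj0] at h2 ⊢
    linear_combination h2
  have hstable := hs.stable (i + (j + 1 : ℕ) + 1)
  rw [htu.left_succ_eq hx]
  generalize hxj : i + ((j + 1 : ℕ) : ZMod m) = x at *
  rcases ht.left_or (x + 1) with hl | ⟨-, hl⟩
  swap
  · exact Or.inr (hl ▸ hnext hl)
  by_cases hxi' : x + 1 = i
  · rw [hxi'] at hl ⊢
    refine Or.inl (Or.inl ?_)
    rw [htu.col_eq hi, ht.col_ne i hxi.symm, ← hxi', htu.left_succ_eq hx, hxi', hl]
    exact hs.follows hj
  · refine Or.inl (htu.stable_of_notMem_arc ?_ hx' hxi' (by rw [hxj]; simp))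
    exact (hstable hxi' (by simp)).congr (ht.col_ne _ (by simp)) hl
      (ht.right_eq fun h => hxi' (hlast h))

theorem Wave.stable_succ {s t u : RingState C} {i p : ZMod m} {j : ℕ} (hs : s.Wave i (j + 1))
    (hj : j + 1 < m) (ht : IsMove s (i + (j + 1 : ℕ)) (s.right (i + (j + 1 : ℕ))) t)
    (htu : AgreesOff (arc (i + 1) j) t u) (hu : ∀ p ∈ arc (i + 1) j, u.Stable p) (hpi : p ≠ i)
    (hp : p ≠ i + (j + 1 : ℕ) + 1) : u.Stable p := by
  by_cases hmem : p ∈ arc (i + 1) j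
  · exact hu p hmem
  by_cases hpx : p = i + (j + 1 : ℕ)
  · refine hpx ▸ Or.inr (Or.inl ?_)
    rw [htu.col_eq (add_succ_notMem_arc i (by omega)), ht.col_self,
      htu.right_eq (add_succ_add_one_notMem_arc i hj), ht.right_self]
  · exact htu.stable_of_notMem_arc
      (ht.stable (hs.stable p hpi hpx) hpx hp (add_one_notMem_arc hmem hpi).2) hmem hpi hpx

theorem Wave.forces_succ {s t : RingState C} {i : ZMod m} {j : ℕ} (hs : s.Wave i (j + 1))
    (hj : j + 1 < m) (hfront : ¬ s.Stable (i + (j + 1 : ℕ)))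
    (ht : IsMove s (i + (j + 1 : ℕ)) (s.right (i + (j + 1 : ℕ))) t)
    (hnext : t.left (i + (j + 1 : ℕ) + 1) = s.right (i + (j + 1 : ℕ)) →
      s.right (i + (j + 1 : ℕ)) ∉ C (i + (j + 1 : ℕ) + 1)) :
    Forces (arc (i + 1) j) (fun u : RingState C => u.Wave i (j + 2)) j t := by
  have hblocked := hs.front.resolve_left hfront
  have hcast : i + ((j + 2 : ℕ) : ZMod m) = i + (j + 1 : ℕ) + 1 := by push_cast; ring
  have hi : i ∉ arc (i + 1) j := self_notMem_arc i (by omega)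
  have hi' : i - 1 ∉ arc (i + 1) j := self_sub_one_notMem_arc i hj
  have hq : i + 1 + (j : ZMod m) = i + (j + 1 : ℕ) := by push_cast; ring
  have hxi : i + (j + 1 : ℕ) ≠ i := add_succ_ne_self i hj
  have hx : i + (j + 1 : ℕ) ∉ arc (i + 1) j := add_succ_notMem_arc i (by omega)
  have hpush := ht.pushable hj (hs.settled) fun p hp =>
    hs.stable p (ne_of_mem_of_not_mem hp hi) (ne_of_mem_of_not_mem hp hx)
  refine (hpush.forces (by omega)).and_agreesOff.weaken subset_rfl le_rfl ?_
  rintro u ⟨⟨hu, hleft, -⟩, htu⟩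
  have hufront := hs.front_succ hj ht hnext htu
  have hustable {p} (hpi : p ≠ i) := hs.stable_succ hj ht htu (fun p hp => (hu p hp).1) hpi
  rw [show i + j + 1 = i + (j + 1 : ℕ) by push_cast; ring] at hleft
  generalize i + ((j + 1 : ℕ) : ZMod m) = x at *
  have hcolx := (htu.col_eq hx).trans ht.col_self
  constructor
  · exact fun p hpi hp => hustable hpi (hcast ▸ hp)
  · simp only [Nat.add_succ_sub_one, arc_succ_right, hq, Set.forall_mem_insert]
    refine ⟨?_, fun p hp => (hu p hp).2⟩
    refine hleft.symm.imp (fun h => hcolx.trans h.symm) fun h => ?_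
    rwa [h, ht.left_self]
  · intro hj'
    have hix : i ≠ x + 1 := fun h => by
      refine natCast_zmod_ne_zero (by omega) hj' ?_
      linear_combination hcast - h
    rw [htu.col_eq hi, ht.col_ne i hxi.symm, htu.left_eq hi', ht.left_eq hix]
    exact hs.follows hj
  · rwa [hcast]
  · rw [htu.left_succ_eq hi, ht.left_eq (by simpa using hxi.symm)]
    exact hs.refused

theorem Wave.forces_last {s t : RingState C} {i : ZMod m} (hs : s.Wave i m)
    (ht : IsMove s i (s.right i) t)
    (hnext : t.left (i + 1) = s.right i → s.right i ∉ C (i + 1)) :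
    Forces (arc (i + 1) (m - 1)) (fun u : RingState C => ∀ j, u.Stable j) (m - 1) t := by
  have hm : 1 < m := Fact.out
  have : NeZero m := ⟨by omega⟩
  have hrefused : t.left (i + 1) ∉ C (i + 1) := (ht.left_or (i + 1)).elim
    (fun h => h ▸ hs.refused) fun h => h.2 ▸ hnext h.2
  have hi_notMem : i ∉ arc (i + 1) (m - 1) := self_notMem_arc i (by omega)
  have hcast : i + ((m - 1 : ℕ) : ZMod m) + 1 = i := by
    rw [Nat.cast_pred (by omega), ZMod.natCast_self]; ring
  have hstable (p : ZMod m) (hp : p ≠ i) : t.Stable p ∨ p + 1 = i ∧ t.right p = s.right i := by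
    by_cases hp' : p = i + 1
    · subst hp'
      exact ht.stable_or_right (hs.stable _ hp (by simp)) hp hs.refused hrefused
    · exact (ht.stable_or (hs.stable p hp (by simpa)) hp).imp_right fun h =>
        h.resolve_left fun h => hp' h.1
  have hpush : t.Pushable (s.right i) i (m - 1) := by
    refine ⟨fun p hp => ?_, fun p hp => ?_, fun _ => ?_⟩
    · by_cases hp' : p = i + 1
      · exact hp' ▸ Or.inr hrefused
      · exact ht.leftSettled (hs.settled p hp) (ne_of_mem_of_not_mem hp hi_notMem) hp'
    · have hp' := ne_of_mem_of_not_mem (arc_subset _ (Nat.sub_le _ 1) hp) hi_notMem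
      exact (hstable p hp').resolve_right fun h =>
        ne_of_mem_of_not_mem (add_one_mem_arc hp) hi_notMem h.1
    · refine (hstable _ fun h => ?_).imp_right And.right
      simp [h] at hcast
  refine (hpush.forces (by omega)).and_agreesOff.weaken subset_rfl le_rfl ?_
  rintro u ⟨⟨hu, -, hright⟩, htu⟩ j
  by_cases hj : j = i
  · rw [ht.right_self, or_self] at hright
    exact hj ▸ Or.inr (Or.inl ((htu.col_eq hi_notMem).trans (ht.col_self.trans hright.symm)))
  · exact (hu j (mem_arc_of_ne hj)).1

theorem stabilizes_of_move_right_of_refused {k : ℕ} {s : RingState C} {i : ZMod m}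
    (hs : ¬ s.Stable i) (hc : s.right i ∈ C i) (hk : 3 * m ^ 2 ≤ k)
    (h : ∀ t, IsMove s i (s.right i) t →
      (t.left (i + 1) = s.right i → s.right i ∉ C (i + 1)) → t.Stabilizes k) :
    s.Stabilizes (k + 1) := by
  refine stabilizes_of_move_right hs hc fun t ht => ?_
  by_cases hnext : t.left (i + 1) = s.right i ∧ s.right i ∈ C (i + 1)
  · have hcol := ht.col_self
    refine (stabilizes_of_left_succ_eq_col (i := i) (hcol.trans ht.right_self.symm)
      (hnext.1.trans hcol.symm) (hcol ▸ hnext.2)).mono hk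
  · exact h t ht (by tauto)

theorem Wave.stabilizes {s : RingState C} {i : ZMod m} {q r : ℕ} (hs : s.Wave i q) (hq : 0 < q)
    (hqr : q + r = m) : s.Stabilizes (3 * m ^ 2 + (r + 1) * m) := by
  induction r generalizing s q with
  | zero =>
    obtain rfl : q = m := hqr
    by_cases hi : s.Stable i
    · refine .done fun p => ?_
      by_cases hp : p = i
      · exact hp ▸ hi
      · exact hs.stable p hp (by simpa)
    have hleft : s.left i ∉ C i := by simpa [hi] using hs.front
    refine (stabilizes_of_move_right_of_refused hi (right_mem_of_not_stable hi hleft)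
      (k := 3 * q ^ 2 + (q - 1)) (by omega) fun t ht hnext => ?_).mono (by omega)
    exact ((hs.forces_last ht hnext).stabilizes (l := 0) fun u hu => .done hu).mono (by omega)
  | succ r ih =>
    obtain ⟨j, rfl⟩ : ∃ j, q = j + 1 := ⟨q - 1, by omega⟩
    by_cases hx : s.Stable (i + (j + 1 : ℕ))
    · refine .done fun p => ?_
      by_cases hp : p = i
      · exact hp ▸ Or.inl (hs.follows (by omega))
      · by_cases hp' : p = i + (j + 1 : ℕ)
        · exact hp' ▸ hx
        · exact hs.stable p hp hp'
    have hright := right_mem_of_not_stable hx (hs.front.resolve_left hx)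
    refine (stabilizes_of_move_right_of_refused hx hright
      (k := j + (3 * m ^ 2 + (r + 1) * m)) (by nlinarith) fun t ht hnext => ?_).mono (by nlinarith)
    exact (hs.forces_succ (by omega) hx ht hnext).stabilizes fun u hu =>
      ih hu (by omega) (by omega)

/- As long as the colour of `i` is accepted it is propagated to the right, and each time one more
player holds it. The first player to refuse it starts a wave. -/
theorem stabilizes_of_col_eq_left {s : RingState C} {i : ZMod m} {r : ℕ} (hi : s.col i = s.left i)
    (hs : ∀ j, j ≠ i + 1 → s.Stable j) (hi' : s.Stable (i + 1) ∨ s.left (i + 1) = s.col i)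
    (hr : ∀ j, s.col j ≠ s.col i → j ∈ arc (i + 1) r) : s.Stabilizes (4 * m ^ 2 + r) := by
  have hm : 1 < m := Fact.out
  induction r generalizing s i with
  | zero =>
    have hcol := not_imp_comm.1 (hr (i + 1)) (by simp)
    refine .done fun j => (eq_or_ne j (i + 1)).elim ?_ (hs j)
    rintro rfl
    exact hi'.elim id fun h => Or.inl (hcol.trans h.symm)
  | succ r ih =>
    by_cases hstable : s.Stable (i + 1)
    · exact .done fun j => (eq_or_ne j (i + 1)).elim (fun h => h ▸ hstable) (hs j)
    have hleft := hi'.resolve_left hstable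
    by_cases hC : s.left (i + 1) ∈ C (i + 1)
    swap
    · have hwave : s.Wave i 1 :=
        ⟨fun p _ hp => hs p (by simpa using hp), by simp, fun _ => hi, by simp [hC], hC⟩
      exact (hwave.stabilizes (r := m - 1) one_pos (by omega)).mono
        (by rw [Nat.sub_add_cancel hm.le]; nlinarith)
    refine stabilizes_of_move_left hstable hC fun t ht => ?_
    have hcol : t.col (i + 1) = s.col i := ht.col_self.trans hleft
    have ht' (j : ZMod m) (hj : j ≠ i + 1) :
        t.Stable j ∨ j = i + 1 + 1 ∧ t.left j = s.left (i + 1) :=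
      ht.stable_or_left_of_col_eq (hs j hj) hj fun h => add_right_cancel h ▸ hleft.symm
    refine ih (i := i + 1) (ht.col_self.trans ht.left_self.symm) (fun j hj => ?_) ?_ ?_
    · by_cases hj' : j = i + 1
      · exact hj' ▸ Or.inl (ht.col_self.trans ht.left_self.symm)
      · exact (ht' j hj').resolve_right fun h => hj h.1
    · exact (ht' _ (by simp)).imp_right fun h => h.2.trans ht.col_self.symm
    · intro j hj
      have hj' : j ≠ i + 1 := by rintro rfl; exact hj rfl
      rw [hcol, ht.col_ne j hj'] at hj
      exact (arc_succ (i + 1) r ▸ hr j hj).resolve_left hj'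

section OneUnstable

variable {s t : RingState C} {i : ZMod m}

theorem IsMove.stabilizes_or_left (ht : IsMove s i (s.left i) t)
    (hs : ∀ j, j ≠ i → s.Stable j) :
    t.Stabilizes (5 * m ^ 2) ∨
      (t.right (i - 1) ∉ C (i - 1) ∧ s.right (i - 1) ∈ C (i - 1)) := by
  have hm : 1 < m := Fact.out
  have : NeZero m := ⟨by omega⟩
  have hcol : t.col i = t.left i := ht.col_self.trans ht.left_self.symm
  by_cases hexc : t.right (i - 1) ∉ C (i - 1) ∧ s.right (i - 1) ∈ C (i - 1)
  · exact Or.inr hexc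
  by_cases haccept : t.right (i - 1) = t.col i ∧ t.col i ∈ C (i - 1)
  · exact Or.inl ((stabilizes_of_right_pred_eq_col hcol haccept.1 haccept.2).mono (by omega))
  have ht' (j : ZMod m) (hj : j ≠ i) : t.Stable j ∨ j = i + 1 ∧ t.left j = s.left i := by
    rcases ht.stable_or (hs j hj) hj with h | h | ⟨hji, hr⟩
    · exact Or.inl h
    · exact Or.inr h
    · obtain rfl : j = i - 1 := eq_sub_of_add_eq hji
      have hr' : t.right (i - 1) ∉ C (i - 1) := fun hmem =>
        haccept ⟨hr.trans ht.col_self.symm, by rwa [ht.col_self, ← hr]⟩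
      exact ht.stable_or_left (hs _ hj) hj (fun h => hexc ⟨hr', h⟩) hr'
  refine Or.inl ((stabilizes_of_col_eq_left (r := m - 1) hcol (fun j hj => ?_) ?_ fun j hj =>
    mem_arc_of_ne fun h => hj (h ▸ rfl)).mono ?_)
  · by_cases hji : j = i
    · exact hji ▸ Or.inl hcol
    · exact (ht' j hji).resolve_right fun h => hj h.1
  · exact (ht' (i + 1) (by simp)).imp_right fun h => h.2.trans ht.col_self.symm
  · have := Nat.le_self_pow two_ne_zero m
    omega

theorem IsMove.stabilizes_or_right (ht : IsMove s i (s.right i) t)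
    (hs : ∀ j, j ≠ i → s.Stable j) :
    t.Stabilizes (5 * m ^ 2) ∨ (t.left (i + 1) ∉ C (i + 1) ∧ s.left (i + 1) ∈ C (i + 1)) := by
  have ht' : IsMove s.reflect (-i) (s.reflect.left (-i)) t.reflect := by
    simpa [RingState.reflect] using ht.reflect
  refine (ht'.stabilizes_or_left fun j hj => stable_reflect.2 (hs _ ?_)).imp .of_reflect ?_
  · rwa [ne_eq, neg_eq_iff_eq_neg]
  · simp [RingState.reflect, add_comm]

theorem stabilizes_of_left_mem_of_right_pred_notMem (hs : ∀ j, j ≠ i → s.Stable j)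
    (hi : ¬ s.Stable i) (hl : s.left i ∈ C i) (hr : s.right (i - 1) ∉ C (i - 1)) :
    s.Stabilizes (5 * m ^ 2 + 1) :=
  stabilizes_of_move_left hi hl fun _ ht =>
    (ht.stabilizes_or_left hs).resolve_right fun h => hr h.2

theorem stabilizes_of_refused (hs : ∀ j, j ≠ i → s.Stable j)
    (hl : s.left i ∈ C i → s.right (i - 1) ∉ C (i - 1))
    (hr : s.right i ∈ C i → s.left (i + 1) ∉ C (i + 1)) : s.Stabilizes (6 * m ^ 2) := by
  have hm : 1 ≤ m ^ 2 := Nat.one_le_pow _ _ (Nat.zero_lt_of_lt (Fact.out : 1 < m))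
  by_cases hi : s.Stable i
  · exact .done fun j => (eq_or_ne j i).elim (fun h => h ▸ hi) (hs j)
  by_cases hleft : s.left i ∈ C i
  · exact (stabilizes_of_left_mem_of_right_pred_notMem hs hi hleft (hl hleft)).mono (by omega)
  · have hright := right_mem_of_not_stable hi hleft
    refine (stabilizes_of_move_right hi hright (k := 5 * m ^ 2) fun t ht => ?_).mono (by omega)
    exact (ht.stabilizes_or_right hs).resolve_right fun h => hr hright h.2

theorem stabilizes_of_left_refused (hl : s.left i ∉ C i) (hl' : s.left (i + 1) ∉ C (i + 1))
    (hr : s.right (i - 1) = s.col i) (hC : s.col i ∈ C (i - 1)) : s.Stabilizes (9 * m ^ 2) := by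
  have hm : 1 ≤ m ^ 2 := Nat.one_le_pow _ _ (Nat.zero_lt_of_lt (Fact.out : 1 < m))
  refine ((forces_of_right_pred_eq_col hr hC).stabilizes (l := 6 * m ^ 2) ?_).mono (by omega)
  rintro t ⟨ht, hcol, hleft', hleft | hleft⟩
  · refine stabilizes_of_refused ht (fun h => absurd h ?_) fun _ => ?_
    · rwa [hleft]
    · rwa [hleft']
  · exact .done fun j => (eq_or_ne j i).elim
      (fun h => h ▸ Or.inl (hcol.trans hleft.symm)) (ht j)

theorem stabilizes_of_right_pred_notMem (hs : ∀ j, j ≠ i → s.Stable j)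
    (hr : s.right (i - 1) ∉ C (i - 1)) : s.Stabilizes (10 * m ^ 2) := by
  have hm : 1 ≤ m ^ 2 := Nat.one_le_pow _ _ (Nat.zero_lt_of_lt (Fact.out : 1 < m))
  by_cases hi : s.Stable i
  · exact .done fun j => (eq_or_ne j i).elim (fun h => h ▸ hi) (hs j)
  by_cases hleft : s.left i ∈ C i
  · exact (stabilizes_of_left_mem_of_right_pred_notMem hs hi hleft hr).mono (by omega)
  refine (stabilizes_of_move_right hi (right_mem_of_not_stable hi hleft) (k := 9 * m ^ 2)
    fun t ht => ?_).mono (by omega)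
  rcases ht.stabilizes_or_right hs with h | ⟨hl', -⟩
  · exact h.mono (by omega)
  by_cases hr' : t.right (i - 1) ∈ C (i - 1)
  · have hcol : t.right (i - 1) = t.col i := (ht.right_or (i - 1)).elim
      (fun h => absurd (h ▸ hr') hr) fun h => h.2.trans ht.col_self.symm
    exact stabilizes_of_left_refused (ht.left_self ▸ hleft) hl' hcol (hcol ▸ hr')
  · refine ((forces_stable_compl i t).stabilizes (l := 6 * m ^ 2) ?_).mono (by omega)
    rintro u ⟨hu, htu⟩
    refine stabilizes_of_refused hu (fun _ => ?_) fun _ => ?_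
    · rwa [htu.right_pred_eq (by simp)]
    · rwa [htu.left_succ_eq (by simp)]

theorem stabilizes_of_left_mem (hs : ∀ j, j ≠ i → s.Stable j) (hi : ¬ s.Stable i)
    (hl : s.left i ∈ C i) : s.Stabilizes (12 * m ^ 2) := by
  have hm : 1 ≤ m ^ 2 := Nat.one_le_pow _ _ (Nat.zero_lt_of_lt (Fact.out : 1 < m))
  refine (stabilizes_of_move_left hi hl (k := 11 * m ^ 2) fun t ht => ?_).mono (by omega)
  rcases ht.stabilizes_or_left hs with h | ⟨hr, -⟩
  · exact h.mono (by omega)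
  refine ((forces_stable_compl i t).stabilizes (l := 10 * m ^ 2) ?_).mono (by omega)
  rintro u ⟨hu, htu⟩
  exact stabilizes_of_right_pred_notMem hu (by rwa [htu.right_pred_eq (by simp)])

theorem stabilizes_of_forall_ne (hs : ∀ j, j ≠ i → s.Stable j) : s.Stabilizes (12 * m ^ 2) := by
  by_cases hi : s.Stable i
  · exact .done fun j => (eq_or_ne j i).elim (fun h => h ▸ hi) (hs j)
  by_cases hl : s.left i ∈ C i
  · exact stabilizes_of_left_mem hs hi hl
  · refine .of_reflect (stabilizes_of_left_mem (i := -i) (fun j hj => stable_reflect.2 (hs _ ?_))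
      ?_ ?_)
    · rwa [ne_eq, neg_eq_iff_eq_neg]
    · simpa [stable_reflect] using hi
    · simpa [reflect] using right_mem_of_not_stable hi hl

end OneUnstable

theorem stabilizes (s : RingState C) : s.Stabilizes (13 * m ^ 2) :=
  ((forces_stable_compl 0 s).stabilizes fun _ ht => stabilizes_of_forall_ne ht.1).mono (by omega)

end RingState

end Ring

/-! ### Improvement paths of the unweighted game -/

section Unweighted

variable {V M : Type} [Fintype V] {adj : V → V → Prop} {C : V → Finset M} {s t : V → M}

/-- A profitable deviation of a single player in the unweighted game without bonuses. -/
abbrev Improves (adj : V → V → Prop) (C : V → Finset M) (s t : V → M) : Prop :=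
  UniDev adj (fun _ _ => 1) (fun _ _ => 0) C s t

/-- A Nash equilibrium of the unweighted game without bonuses. -/
abbrev IsEquilibrium (adj : V → V → Prop) (C : V → Finset M) (s : V → M) : Prop :=
  IsNash adj (fun _ _ => 1) (fun _ _ => 0) C s

theorem ReachesWithin.valid {k : ℕ} (h : ReachesWithin (Improves adj C) k s t)
    (hs : Valid C s) : Valid C t := by
  induction h with
  | refl => exact hs
  | head h _ ih => exact ih h.1.1

theorem ReachesWithin.exists_impPath {k : ℕ} (h : ReachesWithin (Improves adj C) k s t)
    (ht : IsEquilibrium adj C t) :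
    ∃ L ≤ k, ImpPath adj (fun _ _ => 1) (fun _ _ => 0) C s L := by
  induction h with
  | refl k s => exact ⟨0, k.zero_le, fun _ => s, rfl, by simp, ht⟩
  | @head k s u t hsu _ ih =>
    obtain ⟨L, hL, σ, hσ₀, hσ, hnash⟩ := ih ht
    refine ⟨L + 1, by omega, fun q => Nat.casesOn q s σ, rfl, ?_, hnash⟩
    rintro (_ | q) hq
    · exact show Improves adj C s (σ 0) from hσ₀ ▸ hsu
    · exact hσ q (by omega)

theorem payoff_unweighted (s : V → M) (a : V) :
    payoff adj (fun _ _ => 1) (fun _ _ => 0) s a =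
      (Finset.univ.filter fun w => adj w a ∧ s w = s a).card := by
  simp [payoff]

theorem improves_update {a u : V} (hs : Valid C s) (ha : ∀ w, adj w a → s w ≠ s a)
    (hu : adj u a) (hC : s u ∈ C a) : Improves adj C s (Function.update s a (s u)) := by
  have hua : u ≠ a := fun h => ha u hu (h ▸ rfl)
  refine ⟨⟨fun w => ?_, fun h => ?_, fun w hw => ?_⟩, a, fun w hw => by simp [hw]⟩
  · rcases eq_or_ne w a with rfl | hw
    · simpa using hC
    · simpa [hw] using hs w
  · exact ha u hu (by simpa using (congrFun h a).symm)
  · obtain rfl : w = a := by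
      by_contra hwa
      simp [hwa] at hw
    rw [payoff_unweighted, payoff_unweighted, Nat.cast_lt,
      Finset.card_eq_zero.2 (Finset.filter_eq_empty_iff.2 fun x _ hx => ha x hx.1 hx.2)]
    exact Finset.card_pos.2 ⟨u, by simp [hu, hua]⟩

theorem isEquilibrium_of_forall (hs : Valid C s)
    (h : ∀ a, ∃ u v, (∀ w, adj w a ↔ w = u ∨ w = v) ∧ u ≠ a ∧ v ≠ a ∧
      (s a = s u ∨ s a = s v ∨ s u ∉ C a ∧ s v ∉ C a)) : IsEquilibrium adj C s := by
  refine ⟨hs, fun t ⟨⟨ht, hne, hlt⟩, a, hat⟩ => ?_⟩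
  have ha : s a ≠ t a := fun ha =>
    hne (funext fun w => (eq_or_ne w a).elim (fun h => h ▸ ha) (hat w))
  have hcard := hlt a ha
  rw [payoff_unweighted, payoff_unweighted, Nat.cast_lt, ← not_le] at hcard
  have agrees_one {u v : V} (hadj : ∀ w, adj w a ↔ w = u ∨ w = v) (hu : u ≠ a)
      (hsu : s a = s u) : False := by
    refine hcard ((Finset.card_le_card (t := {v}) fun w hw => ?_).trans
      (Finset.one_le_card.2 ⟨u, by simp [hadj, hsu]⟩))
    simp only [Finset.mem_filter_univ, hadj] at hw
    refine Finset.mem_singleton.2 (hw.1.resolve_left ?_)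
    rintro rfl
    exact ha (hsu.trans ((hat w hu).trans hw.2))
  obtain ⟨u, v, hadj, hu, hv, hsu | hsv | hC⟩ := h a
  · exact agrees_one hadj hu hsu
  · exact agrees_one (fun w => (hadj w).trans or_comm) hv hsv
  · refine hcard (le_of_eq_of_le (Finset.card_eq_zero.2 ?_) (Nat.zero_le _))
    refine Finset.filter_eq_empty_iff.2 fun w _ hw => ?_
    rcases (hadj w).1 hw.1 with rfl | rfl
    · exact hC.1 (by rw [hat w hu, hw.2]; exact ht a)
    · exact hC.2 (by rw [hat w hv, hw.2]; exact ht a)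

end Unweighted

/-! ### Flushing pipes -/

section Path

variable {V M : Type} {adj : V → V → Prop} {C : V → Finset M} {p : ℕ → V} {L : ℕ}
  {s s' : V → M} {u v : V}

/-- The node `v` agrees with its in-neighbour `u` if it can. -/
def Settled (C : V → Finset M) (s : V → M) (u v : V) : Prop :=
  s v = s u ∨ s u ∉ C v

theorem Settled.congr (h : Settled C s u v) (hu : s' u = s u) (hv : s' v = s v) :
    Settled C s' u v := by
  rwa [Settled, hu, hv]

/-- The first `L` edges of `p` form a path along which information flows: each node
`p 1, …, p L` has its predecessor as only in-neighbour, and is not revisited. -/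
structure IsFlowPath (adj : V → V → Prop) (p : ℕ → V) (L : ℕ) : Prop where
  adj_iff : ∀ t < L, ∀ w, adj w (p (t + 1)) ↔ w = p t
  injOn : ∀ t < L, ∀ t' ≤ L, p (t + 1) = p t' → t + 1 = t'

theorem IsFlowPath.mono {L' : ℕ} (h : IsFlowPath adj p L) (hL : L' ≤ L) : IsFlowPath adj p L' :=
  ⟨fun t ht => h.adj_iff t (by omega), fun t ht t' ht' => h.injOn t (by omega) t' (by omega)⟩

/-- The effect of settling the nodes `p 1, …, p L` one after the other. At most one new colour,
that of the source `p 0`, comes out of a path that was settled behind its first edge. -/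
structure FlushedPath (C : V → Finset M) (p : ℕ → V) (L : ℕ) (s s' : V → M) : Prop where
  eq_off : ∀ v, (∀ t < L, v ≠ p (t + 1)) → s' v = s v
  settled : ∀ t < L, Settled C s' (p t) (p (t + 1))
  output : (∀ t, 0 < t → t < L → Settled C s (p t) (p (t + 1))) →
    s' (p L) = s (p L) ∨ s' (p L) = s (p 0)

theorem FlushedPath.source_eq (hp : IsFlowPath adj p L) (h : FlushedPath C p L s s') :
    s' (p 0) = s (p 0) :=
  h.eq_off _ fun t ht heq => absurd (hp.injOn t ht 0 (by omega) heq.symm) (by omega)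

theorem FlushedPath.succ_of_settled (hp : IsFlowPath adj p (L + 1)) (h : FlushedPath C p L s s')
    (hL : Settled C s' (p L) (p (L + 1))) : FlushedPath C p (L + 1) s s' where
  eq_off v hv := h.eq_off v fun t ht => hv t (by omega)
  settled t ht := (Nat.lt_succ_iff_lt_or_eq.1 ht).elim (h.settled t) fun ht => ht ▸ hL
  output _ := Or.inl <| h.eq_off _ fun t ht heq =>
    absurd (hp.injOn t (by omega) (L + 1) le_rfl heq.symm) (by omega)

theorem FlushedPath.succ_of_not_settled (hp : IsFlowPath adj p (L + 1))
    (h : FlushedPath C p L s s') (hL : ¬ Settled C s' (p L) (p (L + 1))) :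
    FlushedPath C p (L + 1) s (Function.update s' (p (L + 1)) (s' (p L))) := by
  have hne (t : ℕ) (ht : t ≤ L) : p t ≠ p (L + 1) := fun heq =>
    absurd (hp.injOn L (by omega) t (by omega) heq.symm) (by omega)
  have hlast : s' (p (L + 1)) = s (p (L + 1)) := h.eq_off _ fun t ht heq =>
    absurd (hp.injOn t (by omega) (L + 1) le_rfl heq.symm) (by omega)
  refine ⟨fun v hv => ?_, fun t ht => ?_, fun hs => Or.inr ?_⟩
  · rw [Function.update_of_ne (hv L (by omega)), h.eq_off v fun t ht => hv t (by omega)]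
  · rcases Nat.lt_succ_iff_lt_or_eq.1 ht with ht | rfl
    · exact (h.settled t ht).congr (Function.update_of_ne (hne t (by omega)) _ _)
        (Function.update_of_ne (hne (t + 1) ht) _ _)
    · refine Or.inl ?_
      rw [Function.update_self, Function.update_of_ne (hne t le_rfl)]
  · rw [Function.update_self]
    rcases Nat.eq_zero_or_pos L with rfl | hpos
    · exact h.source_eq (hp.mono (Nat.zero_le 1))
    · exact (h.output fun t ht ht' => hs t ht (by omega)).resolve_left fun hsame =>
        hL ((hs L hpos (by omega)).congr hsame hlast)

variable [Fintype V]

theorem exists_flushedPath (hp : IsFlowPath adj p L) (hs : Valid C s) :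
    ∃ s', ReachesWithin (Improves adj C) L s s' ∧ FlushedPath C p L s s' := by
  induction L with
  | zero => exact ⟨s, .refl 0 s, fun _ _ => rfl, by simp, fun _ => Or.inl rfl⟩
  | succ L ih =>
    obtain ⟨s', hreach, hflush⟩ := ih (hp.mono L.le_succ)
    by_cases hL : Settled C s' (p L) (p (L + 1))
    · exact ⟨s', hreach.mono L.le_succ, hflush.succ_of_settled hp hL⟩
    · have hadj := hp.adj_iff L L.lt_succ_self
      refine ⟨_, hreach.tail (improves_update (hreach.valid hs) (fun w hw => ?_)
        ((hadj _).2 rfl) ?_), hflush.succ_of_not_settled hp hL⟩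
      · rw [(hadj w).1 hw]
        exact fun h => hL (Or.inl h.symm)
      · exact by_contra fun h => hL (Or.inr h)

end Path

/-- A directed graph consisting of `m` junctions arranged on a circle and of pipes between
neighbouring junctions: `pipe (i, true)` leads from junction `i` to junction `i + 1` and
`pipe (i, false)` leads from junction `i` to junction `i - 1`. The inner nodes of the pipe `e` are
`pipe e 1, …, pipe e (len e)`. -/
structure JunctionRing {V : Type} (adj : V → V → Prop) (m : ℕ) where
  junction : ZMod m → V
  pipe : ZMod m × Bool → ℕ → V
  len : ZMod m × Bool → ℕ
  junction_injective : Function.Injective junction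
  pipe_zero : ∀ e, pipe e 0 = junction e.1
  pipe_injOn : ∀ e e' t t', t < len e → t' ≤ len e' → pipe e (t + 1) = pipe e' t' →
    e = e' ∧ t + 1 = t'
  adj_pipe : ∀ e, ∀ t < len e, ∀ w, adj w (pipe e (t + 1)) ↔ w = pipe e t
  adj_junction : ∀ i w, adj w (junction i) ↔
    w = pipe (i - 1, true) (len (i - 1, true)) ∨ w = pipe (i + 1, false) (len (i + 1, false))
  exists_eq : ∀ v, (∃ i, v = junction i) ∨ ∃ e, ∃ t < len e, v = pipe e (t + 1)

namespace JunctionRing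

variable {V M : Type} {adj : V → V → Prop} {m : ℕ} (R : JunctionRing adj m) {C : V → Finset M}
  {s s' s'' : V → M} {A : Finset (ZMod m × Bool)} {e : ZMod m × Bool} {i : ZMod m} {c : M}

/-- The in-neighbour through which the pipe `e` reaches its end junction. -/
def outlet (e : ZMod m × Bool) : V :=
  R.pipe e (R.len e)

/-- Every inner node of the pipe `e` is settled. -/
def Clean (C : V → Finset M) (s : V → M) (e : ZMod m × Bool) : Prop :=
  ∀ t < R.len e, Settled C s (R.pipe e t) (R.pipe e (t + 1))

theorem isFlowPath (e : ZMod m × Bool) : IsFlowPath adj (R.pipe e) (R.len e) :=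
  ⟨R.adj_pipe e, fun t ht t' ht' h => (R.pipe_injOn e e t t' ht ht' h).2⟩

theorem pipe_ne_of_ne {e e' : ZMod m × Bool} {t t' : ℕ} (he : e ≠ e') (ht : t < R.len e)
    (ht' : t' ≤ R.len e') : R.pipe e' t' ≠ R.pipe e (t + 1) := fun h =>
  he (R.pipe_injOn e e' t t' ht ht' h.symm).1

theorem junction_ne_pipe {t : ℕ} (ht : t < R.len e) : R.junction i ≠ R.pipe e (t + 1) := by
  rw [← R.pipe_zero (i, true)]
  intro h
  exact absurd (R.pipe_injOn _ _ _ _ ht (Nat.zero_le _) h.symm).2 (by omega)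

theorem pipe_ne_junction (hi : e.1 ≠ i) {t : ℕ} (ht : t ≤ R.len e) :
    R.pipe e t ≠ R.junction i := by
  rcases t with _ | t
  · rw [R.pipe_zero]
    exact fun h => hi (R.junction_injective h)
  · exact (R.junction_ne_pipe ht).symm

/-- The effect of settling the inner nodes of all the pipes in `A`. -/
structure Flushed (C : V → Finset M) (A : Finset (ZMod m × Bool)) (s s' : V → M) : Prop where
  eq_off : ∀ v, (∀ e ∈ A, ∀ t < R.len e, v ≠ R.pipe e (t + 1)) → s' v = s v
  clean : ∀ e ∈ A, R.Clean C s' e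
  output : ∀ e ∈ A, (∀ t, 0 < t → t < R.len e → Settled C s (R.pipe e t) (R.pipe e (t + 1))) →
    s' (R.outlet e) = s (R.outlet e) ∨ s' (R.outlet e) = s (R.junction e.1)

variable {R}

theorem Flushed.junction_eq (h : R.Flushed C A s s') (i : ZMod m) :
    s' (R.junction i) = s (R.junction i) :=
  h.eq_off _ fun _ _ _ ht => R.junction_ne_pipe ht

theorem Flushed.pipe_eq (h : R.Flushed C A s s') (he : e ∉ A) {t : ℕ} (ht : t ≤ R.len e) :
    s' (R.pipe e t) = s (R.pipe e t) :=
  h.eq_off _ fun _ he' _ ht' => R.pipe_ne_of_ne (ne_of_mem_of_not_mem he' he) ht' ht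

theorem Flushed.insert (h : R.Flushed C A s s') (he : e ∉ A)
    (h' : FlushedPath C (R.pipe e) (R.len e) s' s'') : R.Flushed C (insert e A) s s'' := by
  have heq {e'} (he' : e' ∈ A) {t : ℕ} (ht : t ≤ R.len e') :
      s'' (R.pipe e' t) = s' (R.pipe e' t) :=
    h'.eq_off _ fun _ ht' => R.pipe_ne_of_ne (ne_of_mem_of_not_mem he' he).symm ht' ht
  refine ⟨fun v hv => ?_, ?_, ?_⟩
  · rw [h'.eq_off v (hv e (Finset.mem_insert_self e A)),
      h.eq_off v fun e' he' => hv e' (Finset.mem_insert_of_mem he')]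
  · refine (Finset.forall_mem_insert _ _ _).2 ⟨h'.settled, fun e' he' t ht => ?_⟩
    exact (h.clean e' he' t ht).congr (heq he' ht.le) (heq he' ht)
  · refine (Finset.forall_mem_insert _ _ _).2 ⟨fun hs => ?_, fun e' he' hs => ?_⟩
    · rw [outlet, ← h.pipe_eq he le_rfl, ← h.junction_eq, ← R.pipe_zero]
      exact h'.output fun t ht ht' =>
        (hs t ht ht').congr (h.pipe_eq he ht'.le) (h.pipe_eq he ht')
    · rw [outlet, heq he' le_rfl]
      exact h.output e' he' hs

variable (R) in
theorem exists_flushed [Fintype V] (A : Finset (ZMod m × Bool)) (hs : Valid C s) :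
    ∃ s', ReachesWithin (Improves adj C) (∑ e ∈ A, R.len e) s s' ∧ R.Flushed C A s s' := by
  induction A using Finset.induction_on with
  | empty => exact ⟨s, .refl _ s, fun _ _ => rfl, by simp, by simp⟩
  | insert e A he ih =>
    obtain ⟨s', hreach, hflush⟩ := ih
    obtain ⟨s'', hreach', hflush'⟩ := exists_flushedPath (R.isFlowPath e) (hreach.valid hs)
    rw [Finset.sum_insert he, add_comm]
    exact ⟨s'', hreach.trans hreach', hflush.insert he hflush'⟩

variable (R) in
/-- The state of the ring game played by the junctions. -/
def state (hs : Valid C s) : RingState fun i => (C (R.junction i) : Set M) where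
  col i := s (R.junction i)
  left i := s (R.outlet (i - 1, true))
  right i := s (R.outlet (i + 1, false))
  col_mem i := hs (R.junction i)

section Move

variable (hs : Valid C s) (hs' : Valid C s')

theorem Flushed.pipe_eq_of_update (h : R.Flushed C ({i} ×ˢ Finset.univ)
    (Function.update s (R.junction i) c) s') (he : e.1 ≠ i) {t : ℕ} (ht : t ≤ R.len e) :
    s' (R.pipe e t) = s (R.pipe e t) := by
  rw [h.pipe_eq (mt Finset.mem_product.1 (by simpa using he)) ht,
    Function.update_of_ne (R.pipe_ne_junction he ht)]

theorem Flushed.outlet_of_update (h : R.Flushed C ({i} ×ˢ Finset.univ)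
    (Function.update s (R.junction i) c) s') (hclean : R.Clean C s e) (he : e.1 = i) :
    s' (R.outlet e) = s (R.outlet e) ∨ s' (R.outlet e) = c := by
  have hinner (t : ℕ) (ht : t < R.len e) :
      Function.update s (R.junction i) c (R.pipe e (t + 1)) = s (R.pipe e (t + 1)) :=
    Function.update_of_ne (R.junction_ne_pipe ht).symm _ _
  have hmem : e ∈ {i} ×ˢ Finset.univ := Finset.mem_product.2 ⟨by simpa using he, Finset.mem_univ _⟩
  refine (h.output e hmem fun t ht ht' => ?_).elim (fun h' => ?_) fun h' => ?_
  · obtain ⟨t, rfl⟩ := Nat.exists_eq_add_one.2 ht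
    exact (hclean _ ht').congr (hinner t (by omega)) (hinner _ ht')
  · rw [h']
    by_cases hout : R.outlet e = R.junction i
    · exact Or.inr (by rw [hout, Function.update_self])
    · exact Or.inl (Function.update_of_ne hout _ _)
  · exact Or.inr (by rw [h', he, Function.update_self])

theorem Flushed.clean_of_update (h : R.Flushed C ({i} ×ˢ Finset.univ)
    (Function.update s (R.junction i) c) s') (hclean : ∀ e, R.Clean C s e) (e : ZMod m × Bool) :
    R.Clean C s' e := by
  by_cases he : e.1 = i
  · exact h.clean e (Finset.mem_product.2 ⟨by simpa using he, Finset.mem_univ _⟩)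
  · exact fun t ht =>
      (hclean e t ht).congr (h.pipe_eq_of_update he ht.le) (h.pipe_eq_of_update he ht)

theorem Flushed.isMove (h : R.Flushed C ({i} ×ˢ Finset.univ)
    (Function.update s (R.junction i) c) s') (hclean : ∀ e, R.Clean C s e) :
    (R.state hs).IsMove i c (R.state hs') := by
  have hout (e : ZMod m × Bool) :
      s' (R.outlet e) = s (R.outlet e) ∨ e.1 = i ∧ s' (R.outlet e) = c := by
    by_cases he : e.1 = i
    · exact (h.outlet_of_update (hclean e) he).imp_right (And.intro he)
    · exact Or.inl (h.pipe_eq_of_update he le_rfl)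
  refine ⟨?_, fun j hj => ?_, fun j => ?_, fun j => hout (j + 1, false)⟩
  · exact (h.junction_eq i).trans (Function.update_self _ _ _)
  · exact (h.junction_eq j).trans (Function.update_of_ne (R.junction_injective.ne hj) _ _)
  · exact (hout (j - 1, true)).imp_right (And.imp_left eq_add_of_sub_eq)

variable [Fintype V]

theorem improves_update_junction (hi : ¬ (R.state hs).Stable i)
    (hc : c = (R.state hs).left i ∨ c = (R.state hs).right i) (hC : c ∈ C (R.junction i)) :
    Improves adj C s (Function.update s (R.junction i) c) := by
  have hne (w : V) (hw : adj w (R.junction i)) : s w ≠ s (R.junction i) := fun h => by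
    rcases (R.adj_junction i w).1 hw with rfl | rfl
    · exact hi (Or.inl h.symm)
    · exact hi (Or.inr (Or.inl h.symm))
  rcases hc with rfl | rfl
  · exact improves_update hs hne ((R.adj_junction i _).2 (Or.inl rfl)) hC
  · exact improves_update hs hne ((R.adj_junction i _).2 (Or.inr rfl)) hC

theorem exists_isMove {B : ℕ} (hB : R.len (i, true) + R.len (i, false) < B)
    (hclean : ∀ e, R.Clean C s e) (hi : ¬ (R.state hs).Stable i)
    (hc : c = (R.state hs).left i ∨ c = (R.state hs).right i) (hC : c ∈ C (R.junction i)) :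
    ∃ s', ReachesWithin (Improves adj C) B s s' ∧ (∀ e, R.Clean C s' e) ∧
      ∀ hs' : Valid C s', (R.state hs).IsMove i c (R.state hs') := by
  have himp := improves_update_junction hs hi hc hC
  obtain ⟨s', hreach, hflush⟩ := R.exists_flushed ({i} ×ˢ Finset.univ) himp.1.1
  rw [Finset.sum_product, Finset.sum_singleton, Fintype.sum_bool] at hreach
  exact ⟨s', (hreach.head himp).mono hB, hflush.clean_of_update hclean,
    fun hs' => hflush.isMove hs hs' hclean⟩

end Move

section Simulation

variable [Fintype V]

theorem exists_reachesWithin_of_forces {A : Set (ZMod m)}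
    {P : RingState (fun i => (C (R.junction i) : Set M)) → Prop} {k B : ℕ} (hs : Valid C s)
    (h : (R.state hs).Forces A P k) (hB : ∀ i, R.len (i, true) + R.len (i, false) < B)
    (hclean : ∀ e, R.Clean C s e) :
    ∃ s', ReachesWithin (Improves adj C) (k * B) s s' ∧ (∀ e, R.Clean C s' e) ∧
      ∃ hs' : Valid C s', P (R.state hs') := by
  obtain ⟨σ, hσ⟩ : ∃ σ, σ = R.state hs := ⟨_, rfl⟩
  rw [← hσ] at h
  induction h generalizing s with
  | done h => exact ⟨s, .refl _ s, hclean, hs, hσ ▸ h⟩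
  | move i c _ hi hc hC _ ih =>
    subst hσ
    obtain ⟨s', hreach, hclean', hmove⟩ := exists_isMove hs (hB i) hclean hi hc hC
    have hs' := hreach.valid hs
    obtain ⟨s'', hreach', hP⟩ := ih _ (hmove hs') hs' hclean' rfl
    exact ⟨s'', (hreach.trans hreach').mono (by linarith), hP⟩

theorem isEquilibrium_of_clean [Fact (1 < m)] (hs : Valid C s) (hclean : ∀ e, R.Clean C s e)
    (hstable : ∀ i, (R.state hs).Stable i) : IsEquilibrium adj C s := by
  refine isEquilibrium_of_forall hs fun v => ?_
  rcases R.exists_eq v with ⟨i, rfl⟩ | ⟨e, t, ht, rfl⟩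
  · exact ⟨_, _, R.adj_junction i, R.pipe_ne_junction (by simp) le_rfl,
      R.pipe_ne_junction (by simp) le_rfl, hstable i⟩
  · have hne : R.pipe e t ≠ R.pipe e (t + 1) := fun h =>
      absurd (R.pipe_injOn e e t t ht ht.le h.symm).2 (by omega)
    refine ⟨_, _, fun w => (R.adj_pipe e t ht w).trans (or_self_iff).symm, hne, hne, ?_⟩
    exact (hclean e t ht).imp_right fun h => Or.inr ⟨h, h⟩

variable (R) in
theorem exists_impPath [Fact (1 < m)] {B : ℕ}
    (hB : ∀ i, R.len (i, true) + R.len (i, false) < B) (hs : Valid C s) :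
    ∃ L ≤ 14 * m ^ 2 * B, ImpPath adj (fun _ _ => 1) (fun _ _ => 0) C s L := by
  have : NeZero m := ⟨Nat.ne_zero_of_lt (Fact.out : 1 < m)⟩
  obtain ⟨s₁, hreach₁, hflush⟩ := R.exists_flushed Finset.univ hs
  have hs₁ := hreach₁.valid hs
  obtain ⟨s₂, hreach₂, hclean, hs₂, hstable⟩ := exists_reachesWithin_of_forces hs₁
    (RingState.stabilizes (R.state hs₁)) hB fun e => hflush.clean e (Finset.mem_univ e)
  obtain ⟨L, hL, hpath⟩ :=
    (hreach₁.trans hreach₂).exists_impPath (isEquilibrium_of_clean hs₂ hclean hstable)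
  refine ⟨L, hL.trans ?_, hpath⟩
  have hlen : ∑ e, R.len e ≤ m * B := by
    rw [Fintype.sum_prod_type]
    simp only [Fintype.sum_bool]
    exact (Finset.sum_le_card_nsmul _ _ B fun i _ => (hB i).le).trans (by simp [ZMod.card])
  have := Nat.mul_le_mul_right B (Nat.le_self_pow two_ne_zero m)
  linarith

end Simulation

end JunctionRing

/-! ### Closed chains of cycles -/

section ClosedChain

variable {V : Type} {m n : ℕ} {node : ℕ → ℕ → V} {k : ℕ → ℕ} {x y : ZMod m} {p q : ℕ} {v w : V}

theorem eq_add_one_of_val [NeZero m] (h : y.val = x.val + 1 ∨ x.val = m - 1 ∧ y.val = 0) :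
    y = x + 1 := by
  rw [← ZMod.natCast_zmod_val x, ← ZMod.natCast_zmod_val y]
  rcases h with h | ⟨hx, hy⟩
  · rw [h, Nat.cast_add_one]
  · rw [hx, hy, ← Nat.cast_add_one, Nat.sub_add_cancel NeZero.one_le, ZMod.natCast_self,
      Nat.cast_zero]

theorem chainAdj_iff [NeZero m] (hn : 0 < n) :
    chainAdj m n node w v ↔
      (∃ x : ZMod m, w = node x.val (n - 1) ∧ v = node x.val 0) ∨
        ∃ x : ZMod m, ∃ p, p + 1 < n ∧ w = node x.val p ∧ v = node x.val (p + 1) := by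
  constructor
  · rintro ⟨j, p, hj, hp, hw, hv⟩
    rw [← ZMod.val_natCast_of_lt hj] at hw hv
    rcases (Nat.succ_le_of_lt hp).lt_or_eq with hlt | heq
    · exact Or.inr ⟨_, p, hlt, hw, by rwa [Nat.mod_eq_of_lt hlt] at hv⟩
    · obtain rfl : p = n - 1 := by omega
      exact Or.inl ⟨_, hw, by rwa [Nat.sub_add_cancel hn, Nat.mod_self] at hv⟩
  · rintro (⟨x, hw, hv⟩ | ⟨x, p, hp, hw, hv⟩)
    · refine ⟨x.val, n - 1, x.val_lt, by omega, hw, ?_⟩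
      rwa [Nat.sub_add_cancel hn, Nat.mod_self]
    · exact ⟨x.val, p, x.val_lt, by omega, hw, by rwa [Nat.mod_eq_of_lt hp]⟩

/-- The pipes of a closed chain, whose junction `i` is the node `node i 0` shared by the cycles `i`
and `i + 1`. The cycle `i` thus consists of the pipe `(i, false)` from junction `i` to junction
`i - 1` and of the pipe `(i - 1, true)` back. -/
def chainPipe (node : ℕ → ℕ → V) (k : ℕ → ℕ) : ZMod m × Bool → ℕ → V
  | (i, true), t => node (i + 1).val (k i.val + t)
  | (i, false), t => node i.val t

/-- The number of inner nodes of a pipe of a closed chain whose cycles have `n` nodes. -/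
def chainPipeLen (n : ℕ) (k : ℕ → ℕ) : ZMod m × Bool → ℕ
  | (i, true) => n - 1 - k i.val
  | (i, false) => k (i - 1).val - 1

namespace IsClosedChain

theorem one_lt_cycles (h : IsClosedChain m n node k) : 1 < m := h.1

theorem length_pos (h : IsClosedChain m n node k) : 0 < n := Nat.zero_lt_of_lt h.2.1

variable [NeZero m]

theorem glue_pos (h : IsClosedChain m n node k) (x : ZMod m) : 0 < k x.val :=
  (h.2.2.1 _ x.val_lt).1

theorem glue_lt (h : IsClosedChain m n node k) (x : ZMod m) : k x.val < n :=
  (h.2.2.1 _ x.val_lt).2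

theorem node_zero (h : IsClosedChain m n node k) (x : ZMod m) :
    node x.val 0 = node (x + 1).val (k x.val) := by
  obtain ⟨-, -, -, hglue, hclose, -⟩ := h
  rcases (Nat.succ_le_of_lt x.val_lt).lt_or_eq with hlt | heq
  · rw [hglue _ hlt, ← eq_add_one_of_val (Or.inl (ZMod.val_natCast_of_lt hlt)),
      ZMod.val_natCast_of_lt hlt]
  · have hx : x.val = m - 1 := by omega
    rw [← eq_add_one_of_val (Or.inr ⟨hx, ZMod.val_zero⟩), ZMod.val_zero, hx, hclose]

theorem node_eq_node (h : IsClosedChain m n node k) (hp : p < n) (hq : q < n)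
    (heq : node x.val p = node y.val q) :
    x = y ∧ p = q ∨ y = x + 1 ∧ p = 0 ∧ q = k x.val ∨ x = y + 1 ∧ q = 0 ∧ p = k y.val := by
  obtain ⟨-, -, -, -, -, hinj, -⟩ := h
  rcases hinj _ _ _ _ x.val_lt hp y.val_lt hq heq with
    ⟨hxy, hpq⟩ | ⟨hy, hp, hq⟩ | ⟨hx, hq, hp⟩ | ⟨hx, hy, hp, hq⟩ | ⟨hy, hx, hq, hp⟩
  · exact Or.inl ⟨ZMod.val_injective m hxy, hpq⟩
  · exact Or.inr (Or.inl ⟨eq_add_one_of_val (Or.inl hy), hp, hq⟩)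
  · exact Or.inr (Or.inr ⟨eq_add_one_of_val (Or.inl hx), hq, hp⟩)
  · exact Or.inr (Or.inl ⟨eq_add_one_of_val (Or.inr ⟨hx, hy⟩), hp, hx ▸ hq⟩)
  · exact Or.inr (Or.inr ⟨eq_add_one_of_val (Or.inr ⟨hy, hx⟩), hq, hy ▸ hp⟩)

theorem eq_of_node_eq_node (h : IsClosedChain m n node k) (hp : p + 1 < n)
    (hne : p + 1 ≠ k (x - 1).val) (hq : q < n) (heq : node x.val (p + 1) = node y.val q) :
    x = y ∧ p + 1 = q := by
  rcases h.node_eq_node hp hq heq with h' | ⟨-, h', -⟩ | ⟨rfl, -, h'⟩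
  · exact h'
  · exact absurd h' p.succ_ne_zero
  · exact absurd h' (by rwa [add_sub_cancel_right] at hne)

theorem eq_of_node_zero_eq (h : IsClosedChain m n node k) (hq : q < n)
    (heq : node x.val 0 = node y.val q) : x = y ∧ q = 0 ∨ y = x + 1 ∧ q = k x.val := by
  rcases h.node_eq_node h.length_pos hq heq with ⟨hxy, hq⟩ | ⟨hy, -, hq⟩ | ⟨-, -, hk⟩
  · exact Or.inl ⟨hxy, hq.symm⟩
  · exact Or.inr ⟨hy, hq⟩
  · exact absurd hk (h.glue_pos y).ne

theorem chainAdj_node_succ (h : IsClosedChain m n node k) (hp : p + 1 < n)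
    (hne : p + 1 ≠ k (x - 1).val) :
    chainAdj m n node w (node x.val (p + 1)) ↔ w = node x.val p := by
  rw [chainAdj_iff h.length_pos]
  refine ⟨?_, fun hw => Or.inr ⟨x, p, hp, hw, rfl⟩⟩
  rintro (⟨y, -, hv⟩ | ⟨y, q, hq, rfl, hv⟩)
  · exact absurd (h.eq_of_node_eq_node hp hne h.length_pos hv).2 p.succ_ne_zero
  · obtain ⟨rfl, hpq⟩ := h.eq_of_node_eq_node hp hne hq hv
    rw [Nat.add_right_cancel hpq]

theorem chainAdj_node_zero (h : IsClosedChain m n node k) :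
    chainAdj m n node w (node x.val 0) ↔
      w = node x.val (n - 1) ∨ w = node (x + 1).val (k x.val - 1) := by
  have hk := h.glue_pos x
  rw [chainAdj_iff h.length_pos]
  constructor
  · rintro (⟨y, rfl, hv⟩ | ⟨y, q, hq, rfl, hv⟩)
    · rcases h.eq_of_node_zero_eq h.length_pos hv with ⟨rfl, -⟩ | ⟨-, hk'⟩
      · exact Or.inl rfl
      · exact absurd hk' hk.ne
    · rcases h.eq_of_node_zero_eq hq hv with ⟨-, hq'⟩ | ⟨rfl, hq'⟩
      · exact absurd hq' q.succ_ne_zero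
      · exact Or.inr (by rw [← hq', Nat.add_sub_cancel])
  · refine Or.imp (fun hw => ⟨x, hw, rfl⟩) fun hw => ⟨x + 1, k x.val - 1, ?_, hw, ?_⟩
    · exact (Nat.sub_add_cancel hk).trans_lt (h.glue_lt x)
    · rw [Nat.sub_add_cancel hk, h.node_zero]

theorem chainPipe_injOn (h : IsClosedChain m n node k) (e e' : ZMod m × Bool) (t t' : ℕ)
    (ht : t < chainPipeLen n k e) (ht' : t' ≤ chainPipeLen n k e')
    (heq : chainPipe node k e (t + 1) = chainPipe node k e' t') : e = e' ∧ t + 1 = t' := by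
  obtain ⟨x, _ | _⟩ := e <;> obtain ⟨y, _ | _⟩ := e' <;>
    dsimp only [chainPipe, chainPipeLen] at ht ht' heq
  · have := h.glue_lt (x - 1)
    have := h.glue_lt (y - 1)
    obtain ⟨rfl, rfl⟩ := h.eq_of_node_eq_node (by omega) (by omega) (by omega) heq
    exact ⟨rfl, rfl⟩
  · have := h.glue_lt (x - 1)
    have := h.glue_lt y
    obtain ⟨rfl, hk⟩ := h.eq_of_node_eq_node (by omega) (by omega) (by omega) heq
    rw [add_sub_cancel_right] at ht
    omega
  · have := h.glue_lt (y - 1)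
    obtain ⟨rfl, hk⟩ := h.eq_of_node_eq_node (p := k x.val + t) (by omega)
      (by rw [add_sub_cancel_right]; omega) (by omega) heq
    rw [add_sub_cancel_right] at ht'
    omega
  · have := h.glue_lt y
    obtain ⟨hxy, hk⟩ := h.eq_of_node_eq_node (p := k x.val + t) (by omega)
      (by rw [add_sub_cancel_right]; omega) (by omega) heq
    obtain rfl := add_right_cancel hxy
    exact ⟨rfl, by omega⟩

theorem chainAdj_chainPipe_succ (h : IsClosedChain m n node k) (e : ZMod m × Bool) (t : ℕ)
    (ht : t < chainPipeLen n k e) (w : V) :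
    chainAdj m n node w (chainPipe node k e (t + 1)) ↔ w = chainPipe node k e t := by
  obtain ⟨i, _ | _⟩ := e <;> dsimp only [chainPipeLen] at ht
  · have := h.glue_lt (i - 1)
    exact h.chainAdj_node_succ (by omega) (by omega)
  · exact h.chainAdj_node_succ (p := k i.val + t) (by omega)
      (by rw [add_sub_cancel_right]; omega)

theorem exists_eq_node_zero_or_chainPipe (h : IsClosedChain m n node k) (v : V) :
    (∃ i : ZMod m, v = node i.val 0) ∨
      ∃ e : ZMod m × Bool, ∃ t < chainPipeLen n k e, v = chainPipe node k e (t + 1) := by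
  obtain ⟨j, p, hj, hp, rfl⟩ := h.2.2.2.2.2.2 v
  obtain ⟨x, rfl⟩ : ∃ x : ZMod m, j = x.val := ⟨j, (ZMod.val_natCast_of_lt hj).symm⟩
  rcases p with _ | p
  · exact Or.inl ⟨x, rfl⟩
  rcases lt_trichotomy (p + 1) (k (x - 1).val) with hlt | heq | hgt
  · exact Or.inr ⟨(x, false), p, by dsimp only [chainPipeLen]; omega, rfl⟩
  · exact Or.inl ⟨x - 1, by rw [h.node_zero, sub_add_cancel, heq]⟩
  · refine Or.inr ⟨(x - 1, true), p - k (x - 1).val, by dsimp only [chainPipeLen]; omega, ?_⟩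
    rw [chainPipe, sub_add_cancel, ← add_assoc, Nat.add_sub_cancel' (by omega)]

/-- A closed chain of cycles as a ring of junctions and pipes. -/
def junctionRing (h : IsClosedChain m n node k) : JunctionRing (chainAdj m n node) m where
  junction i := node i.val 0
  pipe := chainPipe node k
  len := chainPipeLen n k
  junction_injective x _ hxy := (h.eq_of_node_zero_eq h.length_pos hxy).elim And.left
    fun hk => absurd hk.2 (h.glue_pos x).ne
  pipe_zero := by
    rintro ⟨i, _ | _⟩
    · rfl
    · exact (h.node_zero i).symm
  pipe_injOn := h.chainPipe_injOn
  adj_pipe := h.chainAdj_chainPipe_succ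
  adj_junction i w := by
    have := h.glue_lt (i - 1)
    rw [h.chainAdj_node_zero]
    dsimp only [chainPipe, chainPipeLen]
    rw [sub_add_cancel, add_sub_cancel_right, Nat.add_sub_cancel' (by omega)]
  exists_eq := h.exists_eq_node_zero_or_chainPipe

theorem junctionRing_len_add_len_lt (h : IsClosedChain m n node k) (i : ZMod m) :
    h.junctionRing.len (i, true) + h.junctionRing.len (i, false) < 2 * n := by
  have := h.glue_lt (i - 1)
  dsimp only [junctionRing, chainPipeLen]
  omega

end IsClosedChain

end ClosedChain

theorem closed_chain_improvement_path_general {V M : Type} [Fintype V] {m n : ℕ}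
    {node : ℕ → ℕ → V} {k : ℕ → ℕ} (h : IsClosedChain m n node k) {C : V → Finset M} {s : V → M}
    (hs : Valid C s) :
    ∃ L ≤ 28 * n * m ^ 2, ImpPath (chainAdj m n node) (fun _ _ => 1) (fun _ _ => 0) C s L := by
  have : Fact (1 < m) := ⟨h.one_lt_cycles⟩
  have : NeZero m := ⟨(Nat.zero_lt_of_lt h.one_lt_cycles).ne'⟩
  obtain ⟨L, hL, hpath⟩ := h.junctionRing.exists_impPath h.junctionRing_len_add_len_lt hs
  exact ⟨L, hL.trans (by ring_nf; rfl), hpath⟩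

/-- There is a constant `c` such that every coordination game without bonuses
on an unweighted closed chain of `m` cycles, each cycle having `n` nodes,
admits, from every joint strategy, a finite improvement path of length at most
`c * n * m ^ 2` ending in a Nash equilibrium. -/
theorem closed_chain_improvement_path :
    ∃ c : ℕ,
      ∀ (V : Type) [Fintype V] (M : Type) [Fintype M],
      ∀ (m n : ℕ) (node : ℕ → ℕ → V) (k : ℕ → ℕ),
        IsClosedChain m n node k →
      ∀ (C : V → Finset M), (∀ i, (C i).Nonempty) →
      ∀ s : V → M, Valid C s →
        ∃ L, L ≤ c * n * m ^ 2 ∧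
          ImpPath (chainAdj m n node) (fun _ _ => 1) (fun _ _ => 0) C s L :=
  ⟨28, fun _ _ _ _ _ _ _ _ h _ _ _ hs => closed_chain_improvement_path_general h hs⟩

end CG
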